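/- arXiv:2004.10801 — 5 statements merged into one kernel-verified Lean document; each statement's English description precedes it below -/
import Mathlib

section
/- Let A be a nontrivial finite group and consider the wreath product A ≀ ℤ = (⊕_{i∈ℤ} A) ⋊ ℤ with symmetric generating set S = (A∖{e}) ∪ {t, t⁻¹}, where t generates ℤ. For s_k ∈ A∖{e} write s_{i,k} = t^{i} s_k t^{-i}. Then for all integers m ≥ 1 and l with 0 < |l| < m and all choices s_{k_j} ∈ A∖{e} (−m ≤ j ≤ m), the element g = s_{0,k_0} s_{1,k_1} ⋯ s_{m,k_m} s_{-1,k_{-1}} ⋯ s_{-m,k_{-m}} t^{l} satisfies κ(g) > 0. -/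
namespace MedScale

/-- Word length of `g` with respect to a generating set `S`: the least length of a
word in the elements of `S` representing `g`. -/
noncomputable def wlen {G : Type*} [Group G] (S : Set G) (g : G) : ℕ :=
  sInf {n : ℕ | ∃ l : List G, (∀ x ∈ l, x ∈ S) ∧ l.prod = g ∧ l.length = n}

/-- Sphere of radius `r` about the identity. -/
def sphere {G : Type*} [Group G] (S : Set G) (r : ℕ) : Set G := {g : G | wlen S g = r}

/-- Ball of radius `r` about the identity. -/
def ball {G : Type*} [Group G] (S : Set G) (r : ℕ) : Set G := {g : G | wlen S g ≤ r}

/-- Spherical comparison distance `𝒮_r(g) = (1/|S_r|) ∑_{w ∈ S_r} |w⁻¹ g w|`. -/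
noncomputable def sphereDist {G : Type*} [Group G] (S : Set G) (r : ℕ) (g : G) : ℝ :=
  (1 / (Nat.card (sphere S r) : ℝ)) * ∑ᶠ w ∈ sphere S r, (wlen S (w⁻¹ * g * w) : ℝ)

/-- Spherical comparison curvature `κ_r^𝒮(g) = (|g| − 𝒮_r(g))/|g|`. -/
noncomputable def sphereCurv {G : Type*} [Group G] (S : Set G) (r : ℕ) (g : G) : ℝ :=
  ((wlen S g : ℝ) - sphereDist S r g) / (wlen S g : ℝ)

/-- Ball comparison distance `ℬ_r(g) = (1/|B_r|) ∑_{w ∈ B_r} |w⁻¹ g w|`. -/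
noncomputable def ballDist {G : Type*} [Group G] (S : Set G) (r : ℕ) (g : G) : ℝ :=
  (1 / (Nat.card (ball S r) : ℝ)) * ∑ᶠ w ∈ ball S r, (wlen S (w⁻¹ * g * w) : ℝ)

/-- Ball comparison curvature `κ_r^ℬ(g) = (|g| − ℬ_r(g))/|g|`. -/
noncomputable def ballCurv {G : Type*} [Group G] (S : Set G) (r : ℕ) (g : G) : ℝ :=
  ((wlen S g : ℝ) - ballDist S r g) / (wlen S g : ℝ)

/-- `GenCon(g) = (1/|S|) ∑_{s ∈ S} |s⁻¹ g s|`. -/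
noncomputable def genCon {G : Type*} [Group G] (S : Set G) (g : G) : ℝ :=
  (1 / (Nat.card S : ℝ)) * ∑ᶠ s ∈ S, (wlen S (s⁻¹ * g * s) : ℝ)

/-- Comparison curvature `κ(g) = (|g| − GenCon(g))/|g|`. -/
noncomputable def curv {G : Type*} [Group G] (S : Set G) (g : G) : ℝ :=
  ((wlen S g : ℝ) - genCon S g) / (wlen S g : ℝ)

end MedScale


namespace Wreath

variable (A : Type*) [Group A]

/-- The restricted product `⊕_{i ∈ ℤ} A`: functions `ℤ → A` with finite support. -/
def Restricted : Subgroup (ℤ → A) where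
  carrier := {f | (Function.mulSupport f).Finite}
  one_mem' := by
    have : Function.mulSupport (1 : ℤ → A) = ∅ := Function.mulSupport_one
    simp [Set.mem_setOf_eq, this]
  mul_mem' := by
    intro f g hf hg
    exact (hf.union hg).subset (Function.mulSupport_mul f g)
  inv_mem' := by
    intro f hf
    simpa [Set.mem_setOf_eq, Function.mulSupport_inv] using hf

lemma shift_mem (k : ℤ) (f : ℤ → A) (hf : f ∈ Restricted A) :
    (fun j => f (j + k)) ∈ Restricted A := by
  have h : Function.mulSupport (fun j => f (j + k)) = (fun j : ℤ => j + k) ⁻¹' (Function.mulSupport f) := rfl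
  show (Function.mulSupport (fun j => f (j + k))).Finite
  rw [h]
  exact Set.Finite.preimage (Set.injOn_of_injective (add_left_injective k)) hf

/-- The shift by `k` as an automorphism of the restricted product. -/
def shiftRes (k : ℤ) : Restricted A ≃* Restricted A where
  toFun f := ⟨fun j => f.1 (j + k), shift_mem A k f.1 f.2⟩
  invFun f := ⟨fun j => f.1 (j + -k), shift_mem A (-k) f.1 f.2⟩
  left_inv f := by ext j; simp
  right_inv f := by ext j; simp
  map_mul' f g := rfl

/-- The shift action of `ℤ` on the restricted product. -/
def shiftHom : Multiplicative ℤ →* MulAut (Restricted A) where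
  toFun k := shiftRes A k.toAdd
  map_one' := by
    ext f j
    show f.1 (j + (0 : ℤ)) = f.1 j
    simp
  map_mul' x y := by
    ext f j
    show f.1 (j + (x.toAdd + y.toAdd)) = f.1 ((j + x.toAdd) + y.toAdd)
    rw [add_assoc]

/-- The wreath product `A ≀ ℤ = (⊕_{i ∈ ℤ} A) ⋊ ℤ`. -/
def W : Type _ := SemidirectProduct (Restricted A) (Multiplicative ℤ) (shiftHom A)

instance : Group (W A) := SemidirectProduct.instGroup

/-- The element of the restricted product equal to `x` at index `0` and trivial elsewhere. -/
def lampAt (x : A) : Restricted A :=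
  ⟨fun j => if j = 0 then x else 1, by
    show (Function.mulSupport _).Finite
    apply Set.Finite.subset (Set.finite_singleton (0 : ℤ))
    intro j hj
    rw [Function.mem_mulSupport] at hj
    by_contra hj0
    simp only [Set.mem_singleton_iff] at hj0
    exact hj (if_neg hj0)⟩

/-- The generator `t` of the `ℤ` factor of `A ≀ ℤ`. -/
def tW : W A := ⟨1, Multiplicative.ofAdd 1⟩

/-- The generator of `A ≀ ℤ` given by a nonidentity element `x ∈ A` at index `0`. -/
def genA (x : A) : W A := ⟨lampAt A x, 1⟩

/-- The symmetric generating set `S = (A ∖ {e}) ∪ {t, t⁻¹}` of `A ≀ ℤ`. -/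
def SW : Set (W A) := {w | ∃ x : A, x ≠ 1 ∧ w = genA A x} ∪ {tW A, (tW A)⁻¹}

/-- `s_{i,k} = tⁱ s_k t⁻ⁱ`, placing `s_k ∈ A ∖ {e}` at index ... -/
def sik (i : ℤ) (x : A) : W A := tW A ^ i * genA A x * tW A ^ (-i)

end Wreath

namespace Wreath

section Aux

variable {A : Type*} [Group A]

/-- Lamp configuration in cursor coordinates. -/
def lam (w : W A) (j : ℤ) : A := (SemidirectProduct.left w).1 (-j)

/-- Cursor position. -/
def pos (w : W A) : ℤ := Multiplicative.toAdd (SemidirectProduct.right w)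

lemma W_ext {v w : W A} (h : ∀ j, lam v j = lam w j) (hp : pos v = pos w) : v = w := by
  apply SemidirectProduct.ext
  · apply Subtype.ext
    funext j
    have := h (-j)
    simpa [lam] using this
  · exact hp

lemma lam_mul (v w : W A) (j : ℤ) : lam (v * w) j = lam v j * lam w (j - pos v) := by
  have h : lam (v * w) j = lam v j * (SemidirectProduct.left w).1 (-j + pos v) := rfl
  rw [h]
  have e : -j + pos v = -(j - pos v) := by ring
  rw [e]
  rfl

lemma pos_mul (v w : W A) : pos (v * w) = pos v + pos w := rfl

lemma lam_one (j : ℤ) : lam (1 : W A) j = 1 := rfl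

lemma pos_one : pos (1 : W A) = 0 := rfl

lemma lam_t (j : ℤ) : lam (tW A) j = 1 := rfl

lemma pos_t : pos (tW A) = 1 := rfl

lemma pos_inv (v : W A) : pos v⁻¹ = - pos v := by
  have := pos_mul v v⁻¹
  rw [mul_inv_cancel, pos_one] at this
  linarith

lemma lam_inv (v : W A) (j : ℤ) : lam v⁻¹ j = (lam v (j + pos v))⁻¹ := by
  have := lam_mul v v⁻¹ (j + pos v)
  rw [mul_inv_cancel, lam_one] at this
  rw [add_sub_cancel_right] at this
  exact (inv_eq_of_mul_eq_one_right this.symm).symm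

lemma lam_gen (x : A) (j : ℤ) : lam (genA A x) j = if j = 0 then x else 1 := by
  have : lam (genA A x) j = if -j = 0 then x else 1 := rfl
  rw [this]; simp

lemma pos_gen (x : A) : pos (genA A x) = 0 := rfl

lemma t_zpow (k : ℤ) : (∀ j, lam (tW A ^ k) j = 1) ∧ pos (tW A ^ k) = k := by
  induction k using Int.induction_on with
  | zero => simp [lam_one, pos_one]
  | succ i ih =>
    rw [zpow_add_one]
    refine ⟨fun j => ?_, ?_⟩
    · rw [lam_mul, ih.1, lam_t, one_mul]
    · rw [pos_mul, ih.2, pos_t]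
  | pred i ih =>
    rw [zpow_sub_one]
    refine ⟨fun j => ?_, ?_⟩
    · rw [lam_mul, ih.1, lam_inv, lam_t, one_mul, inv_one]
    · rw [pos_mul, ih.2, pos_inv, pos_t]; ring

lemma lam_sik (i : ℤ) (x : A) (j : ℤ) : lam (sik A i x) j = if j = i then x else 1 := by
  unfold sik
  rw [lam_mul, lam_mul, (t_zpow _).1, (t_zpow _).1, (t_zpow _).2, lam_gen]
  simp [sub_eq_zero]

lemma pos_sik (i : ℤ) (x : A) : pos (sik A i x) = 0 := by
  unfold sik
  rw [pos_mul, pos_mul, (t_zpow _).2, (t_zpow _).2, pos_gen]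
  ring

lemma prod_pos_part (c : ℤ → A) (n : ℕ) :
    (∀ j, lam (((List.range n).map fun j : ℕ => sik A (j : ℤ) (c j)).prod) j
      = if 0 ≤ j ∧ j < n then c j else 1) ∧
    pos (((List.range n).map fun j : ℕ => sik A (j : ℤ) (c j)).prod) = 0 := by
  induction n with
  | zero =>
    simp only [List.range_zero, List.map_nil, List.prod_nil, lam_one, pos_one, and_true]
    intro j
    rw [if_neg]; push_cast; omega
  | succ n ih =>
    rw [List.range_succ, List.map_append, List.prod_append]
    simp only [List.map_cons, List.map_nil, List.prod_cons, List.prod_nil, mul_one]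
    refine ⟨fun j => ?_, ?_⟩
    · rw [lam_mul, ih.1, ih.2, lam_sik, sub_zero]
      by_cases h : j = n
      · subst h
        simp
      · rw [if_neg h, mul_one]
        congr 1
        apply propext
        push_cast; omega
    · rw [pos_mul, ih.2, pos_sik, add_zero]

lemma prod_neg_part (c : ℤ → A) (n : ℕ) :
    (∀ j, lam (((List.range n).map fun j : ℕ => sik A (-(j + 1 : ℤ)) (c (-(j + 1 : ℤ)))).prod) j
      = if -(n : ℤ) ≤ j ∧ j < 0 then c j else 1) ∧
    pos (((List.range n).map fun j : ℕ => sik A (-(j + 1 : ℤ)) (c (-(j + 1 : ℤ)))).prod) = 0 := by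
  induction n with
  | zero =>
    simp only [List.range_zero, List.map_nil, List.prod_nil, lam_one, pos_one, and_true]
    intro j
    rw [if_neg]; push_cast; omega
  | succ n ih =>
    rw [List.range_succ, List.map_append, List.prod_append]
    simp only [List.map_cons, List.map_nil, List.prod_cons, List.prod_nil, mul_one]
    refine ⟨fun j => ?_, ?_⟩
    · rw [lam_mul, ih.1, ih.2, lam_sik, sub_zero]
      by_cases h : j = -((n : ℤ) + 1)
      · rw [if_pos h, if_neg (by omega), one_mul, if_pos (by push_cast; omega), h]
      · rw [if_neg h, mul_one]
        congr 1
        apply propext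
        push_cast; omega
    · rw [pos_mul, ih.2, pos_sik, add_zero]

lemma lower (L : List (W A)) (hL : ∀ x ∈ L, x ∈ SW A) :
    ∃ (s : Finset ℤ) (a b : ℤ), 0 ≤ a ∧ 0 ≤ b ∧ (∀ j, j ∉ s → lam L.prod j = 1) ∧
      (∀ j ∈ s, -a ≤ j ∧ j ≤ b) ∧ -a ≤ pos L.prod ∧ pos L.prod ≤ b ∧
      (s.card : ℤ) + 2 * (a + b) ≤ L.length + |pos L.prod| := by
  induction L using List.reverseRecOn with
  | nil =>
    refine ⟨∅, 0, 0, le_rfl, le_rfl, ?_, by simp, ?_, ?_, ?_⟩ <;> simp [lam_one, pos_one]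
  | append_singleton L x ih =>
    obtain ⟨s, a, b, ha, hb, h1, h2, h3, h4, h5⟩ := ih (fun y hy => hL y (by simp [hy]))
    have hx : x ∈ SW A := hL x (by simp)
    have hprod : (L ++ [x]).prod = L.prod * x := by simp
    have hlen : ((L ++ [x]).length : ℤ) = L.length + 1 := by simp
    rw [hprod, hlen, pos_mul]
    have key : ∀ e : ℤ, (e = 1 ∨ e = -1) → pos x = e → (∀ j, lam x j = 1) → 
        ∃ (s : Finset ℤ) (a b : ℤ), 0 ≤ a ∧ 0 ≤ b ∧ (∀ j, j ∉ s → lam (L.prod * x) j = 1) ∧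
      (∀ j ∈ s, -a ≤ j ∧ j ≤ b) ∧ -a ≤ pos L.prod + pos x ∧ pos L.prod + pos x ≤ b ∧
      (s.card : ℤ) + 2 * (a + b) ≤ L.length + 1 + |pos L.prod + pos x| := by
      intro e he hpx hlx
      refine ⟨s, max a (-(pos L.prod + e)), max b (pos L.prod + e), by omega, by omega, ?_, ?_, 
        by omega, by omega, ?_⟩
      · intro j hj
        rw [lam_mul, h1 j hj, hlx, one_mul]
      · intro j hj
        have := h2 j hj
        omega
      · rw [hpx]
        rcases abs_cases (pos L.prod) with h | h <;>
        rcases abs_cases (pos L.prod + e) with h' | h' <;> omega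
    rcases hx with ⟨y, hy, rfl⟩ | hx
    · refine ⟨insert (pos L.prod) s, a, b, ha, hb, ?_, ?_, ?_, ?_, ?_⟩
      · intro j hj
        rw [Finset.mem_insert, not_or] at hj
        rw [lam_mul, h1 j hj.2, lam_gen, if_neg (by omega), one_mul]
      · intro j hj
        rcases Finset.mem_insert.1 hj with rfl | hj
        · exact ⟨h3, h4⟩
        · exact h2 j hj
      · rw [pos_gen]; omega
      · rw [pos_gen]; omega
      · have := Finset.card_insert_le (pos L.prod) s
        rw [pos_gen, add_zero]
        omega
    · rcases hx with rfl | hx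
      · exact key 1 (Or.inl rfl) pos_t lam_t
      · have hx' : x = (tW A)⁻¹ := hx
        subst hx'
        refine key (-1) (Or.inr rfl) (by rw [pos_inv, pos_t]) (fun j => ?_)
        rw [lam_inv, lam_t, inv_one]

/-- The configuration `f` with cursor at `p` is reached by a word of length `n`. -/
def Reach (n : ℕ) (f : ℤ → A) (p : ℤ) : Prop :=
  ∃ L : List (W A), (∀ x ∈ L, x ∈ SW A) ∧ (∀ j, lam L.prod j = f j) ∧ pos L.prod = p ∧
    L.length = n

lemma reach_wlen {n : ℕ} {w : W A} (h : Reach n (lam w) (pos w)) :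
    MedScale.wlen (SW A) w ≤ n := by
  obtain ⟨L, h1, h2, h3, h4⟩ := h
  exact Nat.sInf_le ⟨L, h1, W_ext h2 h3, h4⟩

lemma reach_min {n : ℕ} {w : W A} (h : Reach n (lam w) (pos w)) :
    Reach (MedScale.wlen (SW A) w) (lam w) (pos w) := by
  obtain ⟨L, h1, h2, h3, h4⟩ := h
  have hne : {n : ℕ | ∃ L : List (W A), (∀ x ∈ L, x ∈ SW A) ∧ L.prod = w ∧
      L.length = n}.Nonempty := ⟨n, L, h1, W_ext h2 h3, h4⟩
  obtain ⟨L', h1', h2', h3'⟩ := Nat.sInf_mem hne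
  exact ⟨L', h1', by simp [h2'], by rw [h2'], h3'⟩

lemma reach_zero : Reach 0 (fun _ => (1 : A)) 0 :=
  ⟨[], by simp, fun j => lam_one j, pos_one, rfl⟩

lemma reach_move {n : ℕ} {f : ℤ → A} {p : ℤ} (h : Reach n f p) (e : ℤ) (he : e = 1 ∨ e = -1) :
    Reach (n + 1) f (p + e) := by
  obtain ⟨L, h1, h2, h3, h4⟩ := h
  refine ⟨L ++ [tW A ^ e], ?_, ?_, ?_, by simp [h4]⟩
  · intro x hx
    rcases List.mem_append.1 hx with hx | hx
    · exact h1 x hx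
    · rw [List.mem_singleton] at hx
      subst hx
      rcases he with rfl | rfl
      · right; left; simp
      · right; right; simp
  · intro j
    rw [List.prod_append, List.prod_singleton, lam_mul, (t_zpow e).1, mul_one, h2]
  · rw [List.prod_append, List.prod_singleton, pos_mul, (t_zpow e).2, h3]

lemma reach_moves {n : ℕ} {f : ℤ → A} {p : ℤ} (h : Reach n f p) (e : ℤ) (he : e = 1 ∨ e = -1)
    (d : ℕ) : Reach (n + d) f (p + e * d) := by
  induction d with
  | zero => simpa using h
  | succ d ih =>
    have := reach_move ih e he
    have hp : p + e * ((d + 1 : ℕ) : ℤ) = p + e * d + e := by push_cast; ring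
    rw [hp]
    exact this

lemma reach_lamp {n : ℕ} {f : ℤ → A} {p : ℤ} (h : Reach n f p) (x : A) (hx : x ≠ 1) :
    Reach (n + 1) (fun j => f j * if j = p then x else 1) p := by
  obtain ⟨L, h1, h2, h3, h4⟩ := h
  refine ⟨L ++ [genA A x], ?_, ?_, ?_, by simp [h4]⟩
  · intro y hy
    rcases List.mem_append.1 hy with hy | hy
    · exact h1 y hy
    · rw [List.mem_singleton] at hy
      subst hy
      exact Or.inl ⟨x, hx, rfl⟩
  · intro j
    rw [List.prod_append, List.prod_singleton, lam_mul, lam_gen, h2, h3]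
    simp [sub_eq_zero]
  · rw [List.prod_append, List.prod_singleton, pos_mul, pos_gen, h3, add_zero]

open Classical in
lemma reach_sweep {n : ℕ} {u : ℤ} (h : Reach n (fun _ => (1 : A)) u) (e : ℤ)
    (he : e = 1 ∨ e = -1) (f : ℤ → A) (d : ℕ) :
    Reach (n + d + ((Finset.range d).filter fun i : ℕ => f (u + e * i) ≠ 1).card)
      (fun j => if 0 ≤ e * (j - u) ∧ e * (j - u) < d then f j else 1) (u + e * d) := by
  induction d with
  | zero =>
    convert h using 1
    · simp
    · funext j
      rw [if_neg]; push_cast; omega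
    · simp
  | succ d ih =>
    have hfun : ∀ x, x = f (u + e * d) →
        (fun j => (if 0 ≤ e * (j - u) ∧ e * (j - u) < d then f j else 1) *
          if j = u + e * d then x else 1) =
        (fun j => if 0 ≤ e * (j - u) ∧ e * (j - u) < (d + 1 : ℕ) then f j else 1) := by
      rintro x rfl
      funext j
      by_cases hj : j = u + e * d
      · have h' : e * (j - u) = d := by
          rw [hj]; rcases he with rfl | rfl <;> ring
        rw [if_pos hj, if_neg (by omega), one_mul, if_pos (by push_cast; omega), hj]
      · have h' : e * (j - u) ≠ d := by
          rcases he with rfl | rfl <;> omega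
        rw [if_neg hj, mul_one]
        congr 1
        apply propext
        push_cast; omega
    rw [Finset.range_add_one, Finset.filter_insert]
    have hpos : u + e * ((d + 1 : ℕ) : ℤ) = u + e * d + e := by push_cast; ring
    rw [hpos]
    by_cases hx : f (u + e * d) = 1
    · rw [if_neg (by simpa using hx)]
      have h1 := reach_move ih e he
      rw [← hfun _ rfl]
      convert h1 using 1
      · omega
      · funext j
        simp [hx]
    · rw [if_pos hx, Finset.card_insert_of_notMem (by simp)]
      have h1 := reach_move (reach_lamp ih _ hx) e he
      rw [hfun _ rfl] at h1
      convert h1 using 1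
      omega

open Classical in
/-- Upper bound: go from `0` to `-e*a`, sweep to `e*b`, return to `p`. -/
lemma upper (w : W A) (a b k N : ℕ) (e : ℤ) (he : e = 1 ∨ e = -1)
    (hs : ∀ j, lam w j ≠ 1 → -(a : ℤ) ≤ e * j ∧ e * j ≤ b)
    (hk : e * pos w + k = b)
    (hN : ((Finset.range (a + b + 1)).filter
      fun i : ℕ => lam w (-e * a + e * i) ≠ 1).card ≤ N) :
    ∃ n, Reach n (lam w) (pos w) ∧ n ≤ N + 2 * a + b + k := by
  have he' : -e = 1 ∨ -e = -1 := by omega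
  have h1 := reach_moves (reach_zero (A := A)) (-e) he' a
  rw [zero_add, zero_add] at h1
  have hee : e * e = 1 := by rcases he with rfl | rfl <;> norm_num
  -- sweep all but the last move, by treating the last site separately
  have h2 := reach_sweep h1 e he (lam w) (a + b)
  have hfin : -e * (a : ℤ) + e * ((a + b : ℕ) : ℤ) = e * b := by push_cast; ring
  rw [hfin] at h2
  rw [Finset.range_add_one, Finset.filter_insert, hfin] at hN
  have hfun : (fun j => (if 0 ≤ e * (j - -e * (a : ℤ)) ∧ e * (j - -e * (a : ℤ)) < (a + b : ℕ)
        then lam w j else 1) * if j = e * b then lam w (e * b) else 1) = lam w := by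
    funext j
    have h3 : e * (j - -e * (a : ℤ)) = e * j + a := by linear_combination (a : ℤ) * hee
    rw [h3]
    by_cases hj : j = e * b
    · have : e * j = b := by rw [hj]; linear_combination (b : ℤ) * hee
      rw [if_neg (by push_cast; omega), if_pos hj, one_mul, hj]
    · have : e * j ≠ b := by rcases he with rfl | rfl <;> omega
      rw [if_neg hj, mul_one]
      by_cases hl : lam w j = 1
      · simp [hl]
      · have := hs j hl
        rw [if_pos (by push_cast; omega)]
  have hpw : e * (b : ℤ) + -e * k = pos w := by
    linear_combination (-e) * hk + (pos w) * hee
  by_cases hx : lam w (e * b) = 1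
  · rw [if_neg (by simpa using hx)] at hN
    have h3 := reach_moves h2 (-e) he' k
    rw [hpw] at h3
    simp only [hx, ite_self, mul_one] at hfun
    rw [hfun] at h3
    exact ⟨_, h3, by omega⟩
  · rw [if_pos hx, Finset.card_insert_of_notMem (by simp)] at hN
    have h3 := reach_moves (reach_lamp h2 _ hx) (-e) he' k
    rw [hpw, hfun] at h3
    exact ⟨_, h3, by omega⟩

/-- Symmetric form of the upper bound. -/
lemma upper' (w : W A) (u v : ℤ) (N : ℕ) (hu : 0 ≤ u) (hv : 0 ≤ v)
    (hs : ∀ j, lam w j ≠ 1 → -u ≤ j ∧ j ≤ v) (h1 : -u ≤ pos w) (h2 : pos w ≤ v)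
    (hN : ∀ s : Finset ℤ, (∀ j ∈ s, lam w j ≠ 1) → s.card ≤ N) :
    Reach (MedScale.wlen (SW A) w) (lam w) (pos w) ∧
    (MedScale.wlen (SW A) w : ℤ) ≤ N + 2 * (u + v) - |pos w| := by
  classical
  have hN' : ∀ e : ℤ, (e = 1 ∨ e = -1) → ∀ a n : ℕ, ((Finset.range n).filter
      fun i : ℕ => lam w (-e * a + e * i) ≠ 1).card ≤ N := by
    intro e he a n
    rw [← Finset.card_image_of_injective (f := fun i : ℕ => -e * (a : ℤ) + e * i)]
    · apply hN
      intro j hj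
      rw [Finset.mem_image] at hj
      obtain ⟨i, hi, rfl⟩ := hj
      exact (Finset.mem_filter.1 hi).2
    · intro i i' h
      have h' : -e * (a : ℤ) + e * i = -e * (a : ℤ) + e * i' := h
      rcases he with rfl | rfl <;> omega
  rcases le_total 0 (pos w) with hp | hp
  · obtain ⟨n, hr, hn⟩ := upper w u.toNat v.toNat (v - pos w).toNat N 1 (Or.inl rfl)
      (fun j hj => by have := hs j hj; omega) (by omega) (hN' 1 (Or.inl rfl) _ _)
    have := reach_wlen hr
    rw [abs_of_nonneg hp]
    exact ⟨reach_min hr, by omega⟩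
  · obtain ⟨n, hr, hn⟩ := upper w v.toNat u.toNat (u + pos w).toNat N (-1) (Or.inr rfl)
      (fun j hj => by have := hs j hj; omega) (by omega) (hN' (-1) (Or.inr rfl) _ _)
    have := reach_wlen hr
    rw [abs_of_nonpos hp]
    exact ⟨reach_min hr, by omega⟩

lemma SW_finite [Finite A] : (SW A).Finite := by
  apply Set.Finite.union
  · apply (Set.finite_range (genA A)).subset
    rintro w ⟨x, _, rfl⟩
    exact ⟨x, rfl⟩
  · simp

lemma curv_pos {G : Type*} [Group G] (S : Set G) (hS : S.Finite) (g : G) (n : ℕ)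
    (hn : n ≤ MedScale.wlen S g)
    (h : ∀ s ∈ S, MedScale.wlen S (s⁻¹ * g * s) ≤ n)
    (s₀ : G) (hs₀ : s₀ ∈ S) (h₀ : MedScale.wlen S (s₀⁻¹ * g * s₀) < n) :
    0 < MedScale.curv S g := by
  have hpos : (0 : ℝ) < MedScale.wlen S g := by
    have : 0 < MedScale.wlen S g := by omega
    exact_mod_cast this
  unfold MedScale.curv MedScale.genCon
  apply div_pos _ hpos
  rw [finsum_mem_eq_finite_toFinset_sum _ hS, Nat.card_coe_set_eq, Set.ncard_eq_toFinset_card S hS]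
  have hcard : (0 : ℝ) < (hS.toFinset.card : ℝ) := by
    have : 0 < hS.toFinset.card := Finset.card_pos.2 ⟨s₀, by simpa using hs₀⟩
    exact_mod_cast this
  have hlt : ∑ s ∈ hS.toFinset, (MedScale.wlen S (s⁻¹ * g * s) : ℝ) <
      ∑ s ∈ hS.toFinset, (MedScale.wlen S g : ℝ) := by
    apply Finset.sum_lt_sum
    · intro s hs
      have := h s (by simpa using hs)
      exact_mod_cast this.trans hn
    · refine ⟨s₀, by simpa using hs₀, ?_⟩
      exact_mod_cast h₀.trans_le hn
  rw [Finset.sum_const, nsmul_eq_mul] at hlt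
  rw [sub_pos, one_div, inv_mul_lt_iff₀ hcard]
  exact hlt

lemma main_aux [Finite A] (m : ℕ) (l : ℤ) (hl : 0 < |l|) (hlm : |l| < (m : ℤ))
    (c : ℤ → A) (hc : ∀ j : ℤ, |j| ≤ (m : ℤ) → c j ≠ 1) (g : W A)
    (hg : ∀ j, lam g j = if -(m : ℤ) ≤ j ∧ j ≤ m then c j else 1) (hp : pos g = l) :
    0 < MedScale.curv (SW A) g := by
  classical
  have hl' := abs_lt.1 hlm
  have hl0 : l ≠ 0 := abs_pos.1 hl
  have hsupp : ∀ j, lam g j ≠ 1 → -(m : ℤ) ≤ j ∧ j ≤ m := by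
    intro j hj
    by_contra hcon
    exact hj (by rw [hg, if_neg hcon])
  have hcount : ∀ (s : Finset ℤ) (u v : ℤ), (∀ j ∈ s, u ≤ j ∧ j ≤ v) →
      s.card ≤ (v + 1 - u).toNat := by
    intro s u v h
    rw [← Int.card_Icc]
    exact Finset.card_le_card fun j hj => Finset.mem_Icc.2 (h j hj)
  have ht : ∀ e : ℤ, (e = 1 ∨ e = -1) →
      (MedScale.wlen (SW A) ((tW A ^ e)⁻¹ * g * tW A ^ e) : ℤ) ≤ 6 * m + 1 - |l| := by
    intro e he
    have hpos : pos ((tW A ^ e)⁻¹ * g * tW A ^ e) = l := by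
      rw [pos_mul, pos_mul, pos_inv, (t_zpow e).2, hp]; ring
    have hlam : ∀ j, lam ((tW A ^ e)⁻¹ * g * tW A ^ e) j = lam g (j + e) := by
      intro j
      rw [lam_mul, lam_mul, lam_inv, (t_zpow e).1, (t_zpow e).1, pos_inv, (t_zpow e).2]
      simp
    have hsup : ∀ j, lam ((tW A ^ e)⁻¹ * g * tW A ^ e) j ≠ 1 → -(m + e) ≤ j ∧ j ≤ m - e := by
      intro j hj
      rw [hlam] at hj
      have := hsupp _ hj
      omega
    have := (upper' ((tW A ^ e)⁻¹ * g * tW A ^ e) (m + e) (m - e) (2 * m + 1) (by omega) (by omega)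
      hsup (by rw [hpos]; omega) (by rw [hpos]; omega) (by
        intro s hs
        have := hcount s _ _ (fun j hj => hsup j (hs j hj))
        omega)).2
    rw [hpos] at this
    push_cast at this
    linarith
  have hsl : ∀ (x : A) (j : ℤ), lam ((genA A x)⁻¹ * g * genA A x) j =
      (if j = 0 then x⁻¹ else 1) * lam g j * (if j = l then x else 1) := by
    intro x j
    rw [lam_mul, lam_mul, lam_inv, pos_mul, pos_inv, pos_gen, lam_gen, lam_gen, hp]
    by_cases h : j = 0 <;> simp [h, sub_eq_zero, eq_comm]
  have hsp : ∀ x : A, pos ((genA A x)⁻¹ * g * genA A x) = l := by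
    intro x
    rw [pos_mul, pos_mul, pos_inv, pos_gen, hp]; ring
  have hss : ∀ (x : A) (j : ℤ), lam ((genA A x)⁻¹ * g * genA A x) j ≠ 1 →
      -(m : ℤ) ≤ j ∧ j ≤ m := by
    intro x j hj
    by_contra hcon
    apply hj
    rw [hsl, hg, if_neg hcon, if_neg (by omega), if_neg (by omega)]
    simp
  have hgen : ∀ (x : A) (N : ℕ),
      (∀ s : Finset ℤ, (∀ j ∈ s, lam ((genA A x)⁻¹ * g * genA A x) j ≠ 1) → s.card ≤ N) →
      (MedScale.wlen (SW A) ((genA A x)⁻¹ * g * genA A x) : ℤ) ≤ N + 4 * m - |l| := by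
    intro x N hN
    have := (upper' ((genA A x)⁻¹ * g * genA A x) m m N (by omega) (by omega)
      (hss x) (by rw [hsp]; omega) (by rw [hsp]; omega) hN).2
    rw [hsp] at this
    linarith
  have hc0 : c 0 ≠ 1 := hc 0 (by simp)
  apply curv_pos (SW A) SW_finite g (6 * m + 1 - |l|).toNat _ _ (genA A (c 0))
    (Or.inl ⟨_, hc0, rfl⟩)
  · have := hgen (c 0) (2 * m) (by
      intro s hs
      have h0 : (0 : ℤ) ∉ s := by
        intro h0
        apply hs 0 h0
        rw [hsl, hg, if_pos rfl, if_pos (by omega), if_neg (by omega)]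
        simp
      have := hcount (insert 0 s) (-m) m (by
        intro j hj
        rcases Finset.mem_insert.1 hj with rfl | hj
        · omega
        · exact hss _ j (hs j hj))
      rw [Finset.card_insert_of_notMem h0] at this
      omega)
    omega
  · -- lower bound
    obtain ⟨L, h1, h2l, h2p, h3'⟩ := (upper' g m m (2 * m + 1) (by omega) (by omega)
      hsupp (by rw [hp]; omega) (by rw [hp]; omega) (by
        intro s hs
        have := hcount s (-m) m (fun j hj => hsupp j (hs j hj))
        omega)).1
    have h2 : L.prod = g := W_ext h2l h2p
    obtain ⟨s, a, b, ha, hb, k1, k2, k3, k4, k5⟩ := lower L h1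
    rw [h2, hp, h3'] at k5
    rw [h2] at k1
    have hmem : ∀ j : ℤ, -(m : ℤ) ≤ j → j ≤ m → j ∈ s := by
      intro j hj1 hj2
      by_contra hj
      have := k1 j hj
      rw [hg, if_pos ⟨hj1, hj2⟩] at this
      exact hc j (abs_le.2 ⟨hj1, hj2⟩) this
    have hcs : (Finset.Icc (-(m : ℤ)) m).card ≤ s.card :=
      Finset.card_le_card fun j hj => hmem j (Finset.mem_Icc.1 hj).1 (Finset.mem_Icc.1 hj).2
    rw [Int.card_Icc] at hcs
    have e1 := k2 m (hmem m (by omega) le_rfl)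
    have e2 := k2 (-m) (hmem (-m) le_rfl (by omega))
    omega
  · intro w hw
    rcases hw with ⟨x, hx, rfl⟩ | hw
    · have := hgen x (2 * m + 1) (by
        intro s hs
        have := hcount s (-m) m (fun j hj => hss _ j (hs j hj))
        omega)
      omega
    · rcases hw with rfl | hw
      · have := ht 1 (Or.inl rfl)
        rw [zpow_one] at this
        omega
      · have hw' : w = (tW A)⁻¹ := hw
        subst hw'
        have := ht (-1) (Or.inr rfl)
        rw [zpow_neg_one] at this
        omega

end Aux

end Wreath

open Wreath in
/-- Let `A` be a nontrivial finite group and `A ≀ ℤ` the wreath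
product with symmetric generating set `S = (A ∖ {e}) ∪ {t, t⁻¹}`.  Writing
`s_{i,k} = tⁱ s_k t⁻ⁱ` for `s_k ∈ A ∖ {e}`, for all `m ≥ 1`, `0 < |l| < m` and all
choices `c j ∈ A ∖ {e}` (`−m ≤ j ≤ m`), the element
`g = s_{0,c 0} s_{1,c 1} ⋯ s_{m,c m} s_{-1,c(-1)} ⋯ s_{-m,c(-m)} t^l`
has positive comparison curvature. -/
theorem wreath_backtrack_pos_curv (A : Type*) [Group A] [Finite A] [Nontrivial A]
    (m : ℕ) (hm : 1 ≤ m) (l : ℤ) (hl : 0 < |l|) (hlm : |l| < (m : ℤ))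
    (c : ℤ → A) (hc : ∀ j : ℤ, |j| ≤ (m : ℤ) → c j ≠ 1) :
    0 < MedScale.curv (SW A)
      (((List.range (m + 1)).map fun j => sik A (j : ℤ) (c j)).prod *
        (((List.range m).map fun j => sik A (-(j + 1 : ℤ)) (c (-(j + 1 : ℤ)))).prod) *
        tW A ^ l) := by
  have hcast : ∀ n : ℕ, (do let a ← List.range n; pure (a : ℤ)) =
      (List.range n).map (fun a : ℕ => (a : ℤ)) := by
    intro n
    rw [List.map_eq_flatMap]
    rfl
  rw [hcast, hcast, List.map_map, List.map_map]
  change 0 < MedScale.curv (SW A)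
      (((List.range (m + 1)).map fun j : ℕ => sik A (j : ℤ) (c j)).prod *
        (((List.range m).map fun j : ℕ => sik A (-(j + 1 : ℤ)) (c (-(j + 1 : ℤ)))).prod) *
        tW A ^ l)
  apply main_aux m l hl hlm c hc
  · intro j
    have e1 := prod_pos_part c (m + 1)
    have e2 := prod_neg_part c m
    rw [lam_mul, lam_mul, e1.1, e1.2, sub_zero, e2.1, (t_zpow l).1, mul_one]
    by_cases h : 0 ≤ j
    · rw [if_neg (show ¬ (-(m : ℤ) ≤ j ∧ j < 0) by omega), mul_one]
      congr 1
      apply propext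
      push_cast; omega
    · rw [if_neg (show ¬ (0 ≤ j ∧ j < ((m + 1 : ℕ) : ℤ)) by omega), one_mul]
      congr 1
      apply propext
      omega
  · rw [pos_mul, pos_mul, (prod_pos_part c (m + 1)).2, (prod_neg_part c m).2, (t_zpow l).2]
    ring
end

section
/- For all integers 1 < m ≤ k, the element h_{k,m} of Houghton's group H₂ has positive comparison curvature: κ(h_{k,m}) > 0 with respect to the generating set {s, s⁻¹, σ}. -/
namespace Houghton

/-- The generator `s` of Houghton's group `H₂`: shift every bead one position to the
right along the bi-infinite string `ℤ ∖ {0}` (extended to fix `0`), i.e.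
`s n = n + 1` for `n ≥ 1`, `s (-1) = 1`, and `s n = n + 1` for `n ≤ -2`. -/
def s : Equiv.Perm ℤ where
  toFun n := if n = 0 then 0 else if n = -1 then 1 else n + 1
  invFun n := if n = 0 then 0 else if n = 1 then -1 else n - 1
  left_inv := by
    intro n
    beta_reduce
    split_ifs <;> first | omega | exact (‹False›).elim
  right_inv := by
    intro n
    beta_reduce
    split_ifs <;> first | omega | exact (‹False›).elim

/-- The generator `σ` of Houghton's group `H₂`: the transposition exchanging `-1` and `1`. -/
def σ : Equiv.Perm ℤ := Equiv.swap (-1) 1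

/-- The standard symmetric generating set `{s, s⁻¹, σ}` of Houghton's group `H₂`. -/
def S : Set (Equiv.Perm ℤ) := {s, s⁻¹, σ}

/-- Houghton's group `H₂`, as the group generated by `s` and `σ` (equivalently, the
permutations of `ℤ ∖ {0}` that agree with a translation outside a finite set). -/
def H₂ : Subgroup (Equiv.Perm ℤ) := Subgroup.closure {s, σ}

/-- The element `h_{k,m}` exchanging `l` and `-l` for every `m ≤ l ≤ k`
and fixing all other points. -/
def h (k m : ℕ) : Equiv.Perm ℤ where
  toFun n := if m ≤ n.natAbs ∧ n.natAbs ≤ k then -n else n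
  invFun n := if m ≤ n.natAbs ∧ n.natAbs ≤ k then -n else n
  left_inv := by
    intro n; dsimp only
    by_cases hc : m ≤ n.natAbs ∧ n.natAbs ≤ k
    · rw [if_pos hc, if_pos (by simpa [Int.natAbs_neg] using hc), neg_neg]
    · rw [if_neg hc, if_neg hc]
  right_inv := by
    intro n; dsimp only
    by_cases hc : m ≤ n.natAbs ∧ n.natAbs ≤ k
    · rw [if_pos hc, if_pos (by simpa [Int.natAbs_neg] using hc), neg_neg]
    · rw [if_neg hc, if_neg hc]

end Houghton

namespace Houghton

open Finset

theorem s_apply (n : ℤ) : s n = if n = 0 then 0 else if n = -1 then 1 else n + 1 := rfl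
theorem s_inv_apply (n : ℤ) : s⁻¹ n = if n = 0 then 0 else if n = 1 then -1 else n - 1 := rfl
theorem h_apply (k m : ℕ) (n : ℤ) :
    h k m n = if m ≤ n.natAbs ∧ n.natAbs ≤ k then -n else n := rfl

theorem h_inv (k m : ℕ) : (h k m)⁻¹ = h k m := rfl

theorem sz_zero (t : ℤ) : (s ^ t) 0 = 0 := by
  induction t using Int.induction_on with
  | zero => rfl
  | succ n ih => rw [add_comm, zpow_add, zpow_one, Equiv.Perm.mul_apply, ih]; rfl
  | pred n ih => rw [sub_eq_neg_add, zpow_add, zpow_neg_one, Equiv.Perm.mul_apply, ih]; rfl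

/-- Closed form of the powers of `s`. -/
theorem sz_apply (t x : ℤ) (hx : x ≠ 0) : (s ^ t) x =
    if (if 0 < x then x - 1 else x) + t < 0 then (if 0 < x then x - 1 else x) + t
    else (if 0 < x then x - 1 else x) + t + 1 := by
  induction t using Int.induction_on with
  | zero => simp; split_ifs <;> omega
  | succ n ih =>
    rw [add_comm, zpow_add, zpow_one, Equiv.Perm.mul_apply, ih, s_apply]
    split_ifs <;> omega
  | pred n ih =>
    rw [sub_eq_neg_add, zpow_add, zpow_neg_one, Equiv.Perm.mul_apply, ih, s_inv_apply]
    split_ifs <;> omega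

/-- left and right positions adjacent to the gap `t` -/
def lpos (t : ℤ) : ℤ := if 0 < t then t else t - 1
def rpos (t : ℤ) : ℤ := if 0 ≤ t then t + 1 else t

theorem conj_σ (t : ℤ) : s ^ t * σ * (s ^ t)⁻¹ = Equiv.swap (lpos t) (rpos t) := by
  have h1 : (s ^ t) (-1) = lpos t := by
    rw [sz_apply _ _ (by norm_num), lpos]; split_ifs <;> omega
  have h2 : (s ^ t) 1 = rpos t := by
    rw [sz_apply _ _ (by norm_num), rpos]; split_ifs <;> omega
  rw [← h1, ← h2, σ]
  exact (Equiv.swap_apply_apply (s ^ t) (-1) 1).symm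

/-- Pairs of beads which are inverted. -/
def invs (X : Finset (ℤ × ℤ)) (π : Equiv.Perm ℤ) : ℕ :=
  (X.filter (fun q => π q.2 < π q.1)).card

def JJ (k m p : ℕ) : Finset ℕ := (Icc m k).filter (fun j => p < j)

def cA (k m p : ℕ) (π : Equiv.Perm ℤ) (t : ℤ) : ℕ :=
  ((JJ k m p).filter (fun j : ℕ => ((p : ℤ) ≤ t ∧ (p : ℤ) ≤ π (-(j : ℤ))) ∨ (p : ℤ) < π (-(j : ℤ)))).card

def cB (k m p : ℕ) (π : Equiv.Perm ℤ) (t : ℤ) : ℕ :=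
  ((JJ k m p).filter (fun j : ℕ => (t ≤ -(p : ℤ) ∧ π (j : ℤ) ≤ -(p : ℤ)) ∨ π (j : ℤ) < -(p : ℤ))).card

def PInv (k m p : ℕ) (π : Equiv.Perm ℤ) (t : ℤ) (O : ℕ) : Prop :=
  (t.natAbs < p ∧ ∀ x : ℤ, p < x.natAbs → π x = x) ∨ 1 + cA k m p π t + cB k m p π t ≤ O

theorem swap_cases (t x : ℤ) :
    (x = lpos t ∧ Equiv.swap (lpos t) (rpos t) x = rpos t) ∨
    (x = rpos t ∧ Equiv.swap (lpos t) (rpos t) x = lpos t) ∨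
    (x ≠ lpos t ∧ x ≠ rpos t ∧ Equiv.swap (lpos t) (rpos t) x = x) := by
  by_cases h1 : x = lpos t
  · left; exact ⟨h1, by rw [h1, Equiv.swap_apply_left]⟩
  by_cases h2 : x = rpos t
  · right; left; exact ⟨h2, by rw [h2, Equiv.swap_apply_right]⟩
  · right; right; exact ⟨h1, h2, Equiv.swap_apply_of_ne_of_ne h1 h2⟩

theorem PInv_σ {k m p : ℕ} (hp : 1 ≤ p) {π : Equiv.Perm ℤ} {t : ℤ} {O : ℕ}
    (H : PInv k m p π t O) : PInv k m p (Equiv.swap (lpos t) (rpos t) * π) t O := by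
  rcases H with ⟨h1, h2⟩ | H
  · left
    refine ⟨h1, fun x hx => ?_⟩
    rw [Equiv.Perm.mul_apply, h2 x hx]
    rcases swap_cases t x with h | h | h
    · exfalso
      have := h.1
      unfold lpos at this
      split_ifs at this <;> omega
    · exfalso
      have := h.1
      unfold rpos at this
      split_ifs at this <;> omega
    · exact h.2.2
  · right
    have eA : cA k m p (Equiv.swap (lpos t) (rpos t) * π) t = cA k m p π t := by
      unfold cA
      congr 1
      apply Finset.filter_congr
      intro j _
      rw [Equiv.Perm.mul_apply]
      have := swap_cases t (π (-(j : ℤ)))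
      generalize π (-(j : ℤ)) = x at *
      generalize Equiv.swap (lpos t) (rpos t) x = y at *
      unfold lpos rpos at this
      split_ifs at this <;> omega
    have eB : cB k m p (Equiv.swap (lpos t) (rpos t) * π) t = cB k m p π t := by
      unfold cB
      congr 1
      apply Finset.filter_congr
      intro j _
      rw [Equiv.Perm.mul_apply]
      have := swap_cases t (π (j : ℤ))
      generalize π (j : ℤ) = x at *
      generalize Equiv.swap (lpos t) (rpos t) x = y at *
      unfold lpos rpos at this
      split_ifs at this <;> omega
    rw [eA, eB]; exact H

theorem card_filter_le_succ {J : Finset ℕ} {P Q : ℕ → Prop} [DecidablePred P] [DecidablePred Q]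
    (j0 : ℕ → Prop) (hj : ∀ i j, j0 i → j0 j → i = j)
    (H : ∀ j, P j → Q j ∨ j0 j) : (J.filter P).card ≤ (J.filter Q).card + 1 := by
  classical
  calc (J.filter P).card ≤ (J.filter Q ∪ J.filter j0).card := by
        apply Finset.card_le_card
        intro j
        simp only [mem_filter, mem_union]
        intro hh
        rcases H j hh.2 with h | h
        · exact Or.inl ⟨hh.1, h⟩
        · exact Or.inr ⟨hh.1, h⟩
    _ ≤ (J.filter Q).card + (J.filter j0).card := Finset.card_union_le _ _
    _ ≤ _ := by
        gcongr
        rw [Finset.card_le_one]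
        intro a ha b hb
        exact hj a b (mem_filter.1 ha).2 (mem_filter.1 hb).2

theorem cA_mono {k m p : ℕ} {π : Equiv.Perm ℤ} {t t' : ℤ} (ht : (p : ℤ) ≤ t' → (p : ℤ) ≤ t) :
    cA k m p π t' ≤ cA k m p π t := by
  unfold cA
  apply Finset.card_le_card
  intro j
  simp only [mem_filter]
  rintro ⟨h, h'⟩
  exact ⟨h, by omega⟩

theorem cB_mono {k m p : ℕ} {π : Equiv.Perm ℤ} {t t' : ℤ}
    (ht : t' ≤ -(p : ℤ) → t ≤ -(p : ℤ)) :
    cB k m p π t' ≤ cB k m p π t := by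
  unfold cB
  apply Finset.card_le_card
  intro j
  simp only [mem_filter]
  rintro ⟨h, h'⟩
  exact ⟨h, by omega⟩

theorem cA_succ {k m p : ℕ} {π : Equiv.Perm ℤ} {t t' : ℤ} :
    cA k m p π t' ≤ cA k m p π t + 1 := by
  unfold cA
  apply card_filter_le_succ (fun j => π (-(j : ℤ)) = p)
  · intro i j hi hj
    have := π.injective (hi.trans hj.symm)
    omega
  · intro j hj
    omega

theorem cB_succ {k m p : ℕ} {π : Equiv.Perm ℤ} {t t' : ℤ} :
    cB k m p π t' ≤ cB k m p π t + 1 := by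
  unfold cB
  apply card_filter_le_succ (fun j => π (j : ℤ) = -p)
  · intro i j hi hj
    have := π.injective (hi.trans hj.symm)
    omega
  · intro j hj
    omega

theorem cA_zero {k m p : ℕ} {π : Equiv.Perm ℤ} {t : ℤ} (h : ∀ x : ℤ, p < x.natAbs → π x = x) :
    cA k m p π t = 0 := by
  unfold cA
  rw [Finset.card_eq_zero, Finset.filter_eq_empty_iff]
  intro j hj
  have : p < j := (mem_filter.1 hj).2
  rw [h (-(j : ℤ)) (by omega)]
  omega

theorem cB_zero {k m p : ℕ} {π : Equiv.Perm ℤ} {t : ℤ} (h : ∀ x : ℤ, p < x.natAbs → π x = x) :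
    cB k m p π t = 0 := by
  unfold cB
  rw [Finset.card_eq_zero, Finset.filter_eq_empty_iff]
  intro j hj
  have : p < j := (mem_filter.1 hj).2
  rw [h (j : ℤ) (by omega)]
  omega

/-- Moving the cursor from `t` to `t'` without an outward crossing at `p`. -/
theorem PInv_stay {k m p : ℕ} {π : Equiv.Perm ℤ} {t t' : ℤ} {O : ℕ} (hp : 1 ≤ p)
    (htt : t' = t + 1 ∨ t' = t - 1) (hO : ¬ (t'.natAbs = p ∧ t.natAbs < t'.natAbs))
    (H : PInv k m p π t O) : PInv k m p π t' O := by
  rcases H with ⟨h1, h2⟩ | H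
  · exact Or.inl ⟨by omega, h2⟩
  · right
    have a := cA_mono (k := k) (m := m) (p := p) (π := π) (t := t) (t' := t') (by omega)
    have b := cB_mono (k := k) (m := m) (p := p) (π := π) (t := t) (t' := t') (by omega)
    omega

theorem PInv_out {k m p : ℕ} {π : Equiv.Perm ℤ} {t t' : ℤ} {O : ℕ} (hp : 1 ≤ p)
    (htt : t' = t + 1 ∨ t' = t - 1) (hO : t'.natAbs = p ∧ t.natAbs < t'.natAbs)
    (H : PInv k m p π t O) : PInv k m p π t' (O + 1) := by
  rcases H with ⟨h1, h2⟩ | H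
  · right
    rw [cA_zero h2, cB_zero h2]; omega
  · right
    have a := cA_succ (k := k) (m := m) (p := p) (π := π) (t := t) (t' := t')
    have b := cB_succ (k := k) (m := m) (p := p) (π := π) (t := t) (t' := t')
    rcases le_or_gt 0 t' with h | h
    · have b := cB_mono (k := k) (m := m) (p := p) (π := π) (t := t) (t' := t') (by omega)
      omega
    · have a := cA_mono (k := k) (m := m) (p := p) (π := π) (t := t) (t' := t') (by omega)
      omega

/-- The global invariant. -/
def Inv (k m : ℕ) (X : Finset (ℤ × ℤ)) (g : Equiv.Perm ℤ) (n : ℕ) : Prop :=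
  ∃ (t : ℤ) (π : Equiv.Perm ℤ) (O : ℕ → ℕ) (N M : ℕ),
    π = s ^ t * g⁻¹ ∧ π 0 = 0 ∧ (∃ K : ℤ, ∀ x, K < x → π x = x) ∧ n = N + M ∧ invs X π ≤ N ∧
    2 * ∑ p ∈ Ico 1 k, O p ≤ M + t.natAbs ∧ ∀ p ∈ Ico 1 k, PInv k m p π t (O p)

theorem Inv_one (k m : ℕ) (X : Finset (ℤ × ℤ)) (hX : ∀ q ∈ X, q.1 < q.2) : Inv k m X 1 0 := by
  refine ⟨0, 1, fun _ => 0, 0, 0, by simp, rfl, ⟨0, fun _ _ => rfl⟩, rfl, ?_, by simp, ?_⟩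
  · unfold invs
    rw [Nat.le_zero, Finset.card_eq_zero, Finset.filter_eq_empty_iff]
    intro q hq
    have := hX q hq
    simp; omega
  · intro p hp
    left
    have := (mem_Ico.1 hp).1
    refine ⟨by simp; omega, fun _ _ => rfl⟩

theorem Inv_move {k m : ℕ} {X : Finset (ℤ × ℤ)} {g g' : Equiv.Perm ℤ} {n : ℕ}
    (ε : ℤ) (hε : ε = 1 ∨ ε = -1) (hg : g' = g * s ^ ε)
    (H : Inv k m X g n) : Inv k m X g' (n + 1) := by
  obtain ⟨t, π, O, N, M, h1, h2, h3, h4, h5, h6, h7⟩ := H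
  have key : π = s ^ (t + ε) * g'⁻¹ := by
    rw [hg, h1, mul_inv_rev, zpow_add]; group
  by_cases ho : t.natAbs < (t + ε).natAbs
  · refine ⟨t + ε, π, fun p => O p + if p = (t + ε).natAbs then 1 else 0, N, M + 1, key, h2, h3,
      by omega, h5, ?_, ?_⟩
    · rw [Finset.sum_add_distrib, Finset.sum_ite_eq']
      split_ifs <;> omega
    · intro p hp
      have hp1 := (mem_Ico.1 hp).1
      dsimp only
      split_ifs with hc
      · exact PInv_out hp1 (by omega) (by omega) (h7 p hp)
      · exact PInv_stay hp1 (by omega) (by omega) (h7 p hp)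
  · refine ⟨t + ε, π, O, N, M + 1, key, h2, h3, by omega, h5, by omega, ?_⟩
    intro p hp
    have hp1 := (mem_Ico.1 hp).1
    exact PInv_stay hp1 (by omega) (by omega) (h7 p hp)

theorem invs_swap {X : Finset (ℤ × ℤ)} (hX : ∀ q ∈ X, q.1 ≠ 0 ∧ q.2 ≠ 0) {π : Equiv.Perm ℤ}
    (h0 : π 0 = 0) (t : ℤ) : invs X (Equiv.swap (lpos t) (rpos t) * π) ≤ invs X π + 1 := by
  unfold invs
  refine le_trans (Finset.card_le_card (t := insert (π⁻¹ (lpos t), π⁻¹ (rpos t))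
    (X.filter (fun q => π q.2 < π q.1))) ?_) (Finset.card_insert_le _ _)
  intro q0 hq0
  obtain ⟨x, y⟩ := q0
  obtain ⟨hq, hlt⟩ := Finset.mem_filter.1 hq0
  rw [Finset.mem_insert, Finset.mem_filter, Prod.mk.injEq]
  simp only [Equiv.Perm.mul_apply] at hlt
  obtain ⟨hx, hy⟩ := hX _ hq
  have nx : π x ≠ 0 := fun h => hx (π.injective (h.trans h0.symm))
  have ny : π y ≠ 0 := fun h => hy (π.injective (h.trans h0.symm))
  by_cases hc : π y < π x
  · exact Or.inr ⟨hq, hc⟩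
  left
  rw [Equiv.Perm.eq_inv_iff_eq, Equiv.Perm.eq_inv_iff_eq]
  have ha := swap_cases t (π x)
  have hb := swap_cases t (π y)
  generalize Equiv.swap (lpos t) (rpos t) (π x) = u at *
  generalize Equiv.swap (lpos t) (rpos t) (π y) = v at *
  generalize π x = x' at *
  generalize π y = y' at *
  unfold lpos rpos at *
  split_ifs at * <;> omega

theorem Inv_σ {k m : ℕ} {X : Finset (ℤ × ℤ)} (hX : ∀ q ∈ X, q.1 ≠ 0 ∧ q.2 ≠ 0)
    {g : Equiv.Perm ℤ} {n : ℕ} (H : Inv k m X g n) : Inv k m X (g * σ) (n + 1) := by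
  obtain ⟨t, π, O, N, M, h1, h2, ⟨K, h3⟩, h4, h5, h6, h7⟩ := H
  refine ⟨t, Equiv.swap (lpos t) (rpos t) * π, O, N + 1, M, ?_, ?_, ⟨max K ((t.natAbs : ℤ) + 1), ?_⟩,
    by omega, ?_, h6, ?_⟩
  · rw [← conj_σ, h1, mul_inv_rev]
    have : σ⁻¹ = σ := Equiv.swap_inv _ _
    rw [this]; group
  · rw [Equiv.Perm.mul_apply, h2]
    have := swap_cases t 0
    generalize Equiv.swap (lpos t) (rpos t) 0 = u at *
    unfold lpos rpos at *
    split_ifs at * <;> omega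
  · intro x hx
    rw [Equiv.Perm.mul_apply, h3 x (by omega)]
    have := swap_cases t x
    generalize Equiv.swap (lpos t) (rpos t) x = u at *
    unfold lpos rpos at *
    split_ifs at * <;> omega
  · have := invs_swap hX h2 t
    omega
  · intro p hp
    exact PInv_σ (mem_Ico.1 hp).1 (h7 p hp)

theorem Inv_word {k m : ℕ} {X : Finset (ℤ × ℤ)} (hX' : ∀ q ∈ X, q.1 < q.2)
    (hX : ∀ q ∈ X, q.1 ≠ 0 ∧ q.2 ≠ 0) (l : List (Equiv.Perm ℤ)) (hl : ∀ x ∈ l, x ∈ S) :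
    Inv k m X l.prod l.length := by
  induction l using List.reverseRecOn with
  | nil => exact Inv_one k m X hX'
  | append_singleton l a ih =>
    have ih := ih (fun x hx => hl x (by simp [hx]))
    have ha : a ∈ S := hl a (by simp)
    rw [List.prod_append, List.prod_singleton, List.length_append, List.length_singleton]
    rcases ha with rfl | rfl | rfl
    · exact Inv_move 1 (Or.inl rfl) (by simp) ih
    · exact Inv_move (-1) (Or.inr rfl) (by simp) ih
    · exact Inv_σ hX ih

/-- Pairs of beads inverted by `h`, grouped by their larger absolute value. -/
noncomputable def E (j : ℕ) : Finset (ℤ × ℤ) :=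
  ((Ioc (-(j : ℤ)) j).erase 0).image (fun y => (-(j : ℤ), y)) ∪
  ((Ioo (-(j : ℤ)) j).erase 0).image (fun x => (x, (j : ℤ)))

theorem mem_E {j : ℕ} {q : ℤ × ℤ} : q ∈ E j ↔
    (q.1 = -j ∧ -(j : ℤ) < q.2 ∧ q.2 ≤ j ∧ q.2 ≠ 0) ∨
    (q.2 = j ∧ -(j : ℤ) < q.1 ∧ q.1 < j ∧ q.1 ≠ 0) := by
  obtain ⟨x, y⟩ := q
  simp only [E, mem_union, mem_image, mem_erase, mem_Ioc, mem_Ioo, Prod.mk.injEq]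
  constructor
  · rintro (⟨a, ha, rfl, rfl⟩ | ⟨a, ha, rfl, rfl⟩)
    · left; omega
    · right; omega
  · rintro (hh | hh)
    · left; exact ⟨y, by omega, by omega, rfl⟩
    · right; exact ⟨x, by omega, rfl, by omega⟩

theorem card_E {j : ℕ} (hj : 1 ≤ j) : (E j).card = 4 * j - 3 := by
  unfold E
  rw [Finset.card_union_of_disjoint, Finset.card_image_of_injective, Finset.card_image_of_injective,
    Finset.card_erase_of_mem, Finset.card_erase_of_mem, Int.card_Ioc, Int.card_Ioo]
  · omega
  · rw [mem_Ioo]; omega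
  · rw [mem_Ioc]; omega
  · intro a b hab; exact (Prod.mk.inj hab).1
  · intro a b hab; exact (Prod.mk.inj hab).2
  · rw [Finset.disjoint_left]
    intro q h1 h2
    rw [mem_image] at h1 h2
    obtain ⟨a, ha, rfl⟩ := h1
    obtain ⟨b, hb, hb'⟩ := h2
    rw [mem_erase, mem_Ioo] at hb
    have := (Prod.mk.inj hb').1
    omega

noncomputable def XX (k m : ℕ) : Finset (ℤ × ℤ) := (Icc m k).biUnion E

theorem mem_XX {k m : ℕ} {q : ℤ × ℤ} : q ∈ XX k m ↔ ∃ j, (m ≤ j ∧ j ≤ k) ∧ q ∈ E j := by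
  simp [XX]

theorem card_XX {k m : ℕ} (hm : 1 ≤ m) : (XX k m).card = ∑ j ∈ Icc m k, (4 * j - 3) := by
  unfold XX
  rw [Finset.card_biUnion]
  · apply Finset.sum_congr rfl
    intro j hj
    exact card_E (hm.trans (mem_Icc.1 hj).1)
  · intro i hi j hj hij
    change Disjoint (E i) (E j)
    rw [Finset.disjoint_left]
    intro q h1 h2
    rw [mem_E] at h1 h2
    omega

theorem invs_h {k m : ℕ} : invs (XX k m) (h k m) = (XX k m).card := by
  unfold invs
  congr 1
  rw [Finset.filter_eq_self]
  intro q hq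
  obtain ⟨j, hj, hq⟩ := mem_XX.1 hq
  rw [mem_E] at hq
  rw [h_apply, h_apply]
  split_ifs <;> omega

theorem cA_h {k m p : ℕ} : cA k m p (h k m) 0 = (JJ k m p).card := by
  unfold cA
  congr 1
  rw [Finset.filter_eq_self]
  intro j hj
  simp only [JJ, mem_filter, mem_Icc] at hj
  right
  rw [h_apply]
  split_ifs <;> omega

theorem cB_h {k m p : ℕ} : cB k m p (h k m) 0 = (JJ k m p).card := by
  unfold cB
  congr 1
  rw [Finset.filter_eq_self]
  intro j hj
  simp only [JJ, mem_filter, mem_Icc] at hj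
  right
  rw [h_apply]
  split_ifs <;> omega

theorem sum_JJ {k m : ℕ} (hm : 1 ≤ m) :
    ∑ p ∈ Ico 1 k, (JJ k m p).card = ∑ j ∈ Icc m k, (j - 1) := by
  have : ∀ p, (JJ k m p).card = ∑ j ∈ Icc m k, if p < j then 1 else 0 := by
    intro p; rw [JJ, Finset.card_filter]
  simp_rw [this]
  rw [Finset.sum_comm]
  apply Finset.sum_congr rfl
  intro j hj
  rw [mem_Icc] at hj
  rw [← Finset.card_filter]
  have : (Ico 1 k).filter (fun p => p < j) = Ico 1 j := by
    ext p; simp only [mem_filter, mem_Ico]; omega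
  rw [this, Nat.card_Ico]

theorem lower_bound {k m : ℕ} (hm : 1 < m) (hk : m ≤ k) (l : List (Equiv.Perm ℤ))
    (hl : ∀ x ∈ l, x ∈ S) (hp : l.prod = h k m) :
    ∑ j ∈ Icc m k, (8 * j - 7) + 2 * (k - 1) ≤ l.length := by
  have H := Inv_word (k := k) (m := m) (X := XX k m)
    (by intro q hq; obtain ⟨j, hj, hq⟩ := mem_XX.1 hq; rw [mem_E] at hq; omega)
    (by intro q hq; obtain ⟨j, hj, hq⟩ := mem_XX.1 hq; rw [mem_E] at hq; omega) l hl
  rw [hp] at H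
  obtain ⟨t, π, O, N, M, h1, h2, ⟨K, h3⟩, h4, h5, h6, h7⟩ := H
  rw [h_inv] at h1
  have ht : t = 0 := by
    have := h3 ((K.natAbs : ℤ) + k + t.natAbs + 2) (by omega)
    rw [h1, Equiv.Perm.mul_apply, h_apply, if_neg (by omega), sz_apply _ _ (by omega)] at this
    split_ifs at this <;> omega
  subst ht
  rw [zpow_zero, one_mul] at h1
  subst h1
  rw [invs_h, card_XX (by omega)] at h5
  have hO : ∀ p ∈ Ico 1 k, 2 * (JJ k m p).card + 1 ≤ O p := by
    intro p hp
    rw [mem_Ico] at hp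
    rcases h7 p (mem_Ico.2 hp) with ⟨_, h⟩ | h
    · exfalso
      have := h k (by omega)
      rw [h_apply] at this
      split_ifs at this <;> omega
    · rw [cA_h, cB_h] at h; omega
  have hs := Finset.sum_le_sum hO
  rw [Finset.sum_add_distrib, ← Finset.mul_sum, sum_JJ (by omega)] at hs
  simp only [Finset.sum_const, Nat.card_Ico, smul_eq_mul, mul_one] at hs
  have e : ∑ j ∈ Icc m k, (8 * j - 7) = ∑ j ∈ Icc m k, (4 * j - 3) + 4 * ∑ j ∈ Icc m k, (j - 1) := by
    rw [Finset.mul_sum, ← Finset.sum_add_distrib]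
    apply Finset.sum_congr rfl
    intro j hj
    rw [mem_Icc] at hj
    omega
  simp at h6
  omega

/-- `g` is a product of `n` generators. -/
def W (g : Equiv.Perm ℤ) (n : ℕ) : Prop :=
  ∃ l : List (Equiv.Perm ℤ), (∀ x ∈ l, x ∈ S) ∧ l.prod = g ∧ l.length = n

theorem W_mul {a b : Equiv.Perm ℤ} {i j : ℕ} (ha : W a i) (hb : W b j) : W (a * b) (i + j) := by
  obtain ⟨l, h1, rfl, rfl⟩ := ha
  obtain ⟨l', h1', rfl, rfl⟩ := hb
  refine ⟨l ++ l', ?_, by simp, by simp⟩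
  intro x hx
  rcases List.mem_append.1 hx with hh | hh
  · exact h1 x hh
  · exact h1' x hh

theorem W_gen {a : Equiv.Perm ℤ} (ha : a ∈ S) : W a 1 := ⟨[a], by simpa using ha, by simp, rfl⟩
theorem W_s : W s 1 := W_gen (Or.inl rfl)
theorem W_s' : W s⁻¹ 1 := W_gen (Or.inr (Or.inl rfl))
theorem W_σ : W σ 1 := W_gen (Or.inr (Or.inr rfl))

theorem W_pow {a : Equiv.Perm ℤ} (ha : W a 1) (n : ℕ) : W (a ^ n) n := by
  induction n with
  | zero => exact ⟨[], by simp, by simp, rfl⟩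
  | succ n ih => rw [pow_succ]; exact W_mul ih ha

theorem W_T (n : ℕ) : W (Equiv.swap (-((n : ℤ) + 1)) 1) (4 * n + 1) := by
  induction n with
  | zero => exact W_σ
  | succ n ih =>
    have e : Equiv.swap (-(((n + 1 : ℕ) : ℤ) + 1)) 1 =
        (σ * s⁻¹) * Equiv.swap (-((n : ℤ) + 1)) 1 * (s * σ) := by
      have := Equiv.swap_apply_apply (σ * s⁻¹) (-((n : ℤ) + 1)) 1
      have e1 : (σ * s⁻¹) (-((n : ℤ) + 1)) = -(((n + 1 : ℕ) : ℤ) + 1) := by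
        rw [Equiv.Perm.mul_apply, s_inv_apply, if_neg (by omega), if_neg (by omega), σ,
          Equiv.swap_apply_of_ne_of_ne (by omega) (by omega)]
        push_cast; ring
      have e2 : (σ * s⁻¹) 1 = 1 := by
        rw [Equiv.Perm.mul_apply, s_inv_apply]; simp [σ]
      have e3 : (σ * s⁻¹)⁻¹ = s * σ := by
        rw [mul_inv_rev, inv_inv]; congr 1
      rw [e1, e2, e3] at this
      exact this
    rw [e]
    have := W_mul (W_mul (W_mul W_σ W_s') ih) (W_mul W_s W_σ)
    convert this using 1
    ring

theorem h_succ {k m : ℕ} (hk : m ≤ k + 1) (hm : 1 ≤ m) :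
    h (k + 1) m = h k m * Equiv.swap (-((k + 1 : ℕ) : ℤ)) ((k + 1 : ℕ) : ℤ) := by
  ext x
  rw [Equiv.Perm.mul_apply]
  by_cases h1 : x = -((k + 1 : ℕ) : ℤ)
  · rw [h1, Equiv.swap_apply_left, h_apply, h_apply]
    split_ifs <;> omega
  by_cases h2 : x = ((k + 1 : ℕ) : ℤ)
  · rw [h2, Equiv.swap_apply_right, h_apply, h_apply]
    split_ifs <;> omega
  rw [Equiv.swap_apply_of_ne_of_ne h1 h2, h_apply, h_apply]
  split_ifs <;> omega

theorem τ_eq (j : ℕ) (hj : 1 ≤ j) : Equiv.swap (-(j : ℤ)) (j : ℤ) =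
    s ^ (j - 1) * Equiv.swap (-(((2 * j - 2 : ℕ) : ℤ) + 1)) 1 * (s ^ (j - 1))⁻¹ := by
  have := Equiv.swap_apply_apply (s ^ (j - 1)) (-(((2 * j - 2 : ℕ) : ℤ) + 1)) 1
  rw [← this, ← zpow_natCast, sz_apply _ _ (by omega), sz_apply _ _ (by omega)]
  congr 1
  · split_ifs <;> omega
  · split_ifs <;> omega

/-- `s⁻¹ h s^(k-1)` has a short word. -/
theorem W_main {m : ℕ} (hm : 1 < m) (d : ℕ) :
    W (s⁻¹ * h (m + d) m * s ^ (m + d - 1))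
      (∑ j ∈ Icc m (m + d), (8 * j - 7) + (m + d - 2)) := by
  induction d with
  | zero =>
    have e : h m m = Equiv.swap (-(m : ℤ)) (m : ℤ) := by
      obtain ⟨n, rfl⟩ : ∃ n, m = n + 1 := ⟨m - 1, by omega⟩
      rw [h_succ le_rfl (by omega)]
      have : h n (n + 1) = 1 := by
        ext x; rw [h_apply, if_neg (by omega)]; rfl
      rw [this, one_mul]
    rw [add_zero, e, τ_eq m (by omega)]
    have := W_mul (W_pow W_s (m - 2)) (W_T (2 * m - 2))
    convert this using 1
    · obtain ⟨n, rfl⟩ : ∃ n, m = n + 2 := ⟨m - 2, by omega⟩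
      have e1 : n + 2 - 1 = n + 1 := by omega
      have e2 : n + 2 - 2 = n := by omega
      rw [e1, e2, pow_succ' s n]
      group
    · simp; omega
  | succ d ih =>
    have := W_mul (W_mul ih W_s) (W_T (2 * (m + d + 1) - 2))
    convert this using 1
    · rw [← add_assoc, h_succ (by omega) (by omega), τ_eq (m + d + 1) (by omega)]
      have e1 : m + d + 1 - 1 = (m + d - 1) + 1 := by omega
      rw [e1, pow_succ s]
      group
    · rw [← add_assoc, Finset.sum_Icc_succ_top (by omega)]
      omega

theorem W_conj {k m : ℕ} (hm : 1 < m) (hk : m ≤ k) :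
    W (s⁻¹ * h k m * s) (∑ j ∈ Icc m k, (8 * j - 7) + 2 * (k - 2)) := by
  obtain ⟨d, rfl⟩ := Nat.exists_eq_add_of_le hk
  have := W_mul (W_main hm d) (W_pow W_s' (m + d - 2))
  convert this using 1
  · have e1 : m + d - 1 = (m + d - 2) + 1 := by omega
    rw [e1, pow_succ' s]
    group
  · omega

theorem W_reflect {g : Equiv.Perm ℤ} {n : ℕ} (hg : W g n) :
    W (Equiv.neg ℤ * g * (Equiv.neg ℤ)⁻¹) n := by
  obtain ⟨l, h1, rfl, rfl⟩ := hg
  refine ⟨l.map (MulAut.conj (Equiv.neg ℤ : Equiv.Perm ℤ)), ?_, ?_, by simp⟩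
  · intro x hx
    obtain ⟨y, hy, rfl⟩ := List.mem_map.1 hx
    rcases h1 y hy with rfl | rfl | rfl
    · right; left
      ext x
      rw [s_inv_apply]
      simp only [MulAut.conj_apply]
      change -(s (-x)) = _
      rw [s_apply]
      split_ifs <;> omega
    · left
      ext x
      rw [s_apply]
      simp only [MulAut.conj_apply]
      change -(s⁻¹ (-x)) = _
      rw [s_inv_apply]
      split_ifs <;> omega
    · right; right
      rw [Set.mem_singleton_iff, MulAut.conj_apply]
      have := Equiv.swap_apply_apply (Equiv.neg ℤ : Equiv.Perm ℤ) (-1) 1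
      unfold σ
      rw [← this]
      simp [Equiv.swap_comm]
  · rw [← map_list_prod]; rfl

theorem W_conj' {k m : ℕ} (hm : 1 < m) (hk : m ≤ k) :
    W (s * h k m * s⁻¹) (∑ j ∈ Icc m k, (8 * j - 7) + 2 * (k - 2)) := by
  convert W_reflect (W_conj hm hk) using 1
  ext x
  change s (h k m (s⁻¹ x)) = -(s⁻¹ (h k m (s (-x))))
  have e1 : s (-x) = -(s⁻¹ x) := by
    rw [s_inv_apply, s_apply]; split_ifs <;> omega
  have e2 : ∀ y, h k m (-y) = -(h k m y) := by
    intro y; rw [h_apply, h_apply, Int.natAbs_neg]; split_ifs <;> rfl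
  have e3 : ∀ y, s⁻¹ (-y) = -(s y) := by
    intro y; rw [s_inv_apply, s_apply]; split_ifs <;> omega
  rw [e1, e2, e3, neg_neg]

theorem wlen_le {g : Equiv.Perm ℤ} {n : ℕ} (hg : W g n) : MedScale.wlen S g ≤ n :=
  Nat.sInf_le hg

theorem wlen_ge {k m : ℕ} (hm : 1 < m) (hk : m ≤ k) :
    ∑ j ∈ Icc m k, (8 * j - 7) + 2 * (k - 1) ≤ MedScale.wlen S (h k m) := by
  have hne : W (h k m) (1 + (∑ j ∈ Icc m k, (8 * j - 7) + 2 * (k - 2)) + 1) := by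
    convert W_mul (W_mul W_s (W_conj hm hk)) W_s' using 1
    group
  obtain ⟨l, h1, h2, h3⟩ := Nat.sInf_mem (s := {n : ℕ | W (h k m) n}) ⟨_, hne⟩
  have := lower_bound hm hk l h1 h2
  rw [h3] at this
  exact this

theorem σ_comm {k m : ℕ} (hm : 1 < m) : σ⁻¹ * h k m * σ = h k m := by
  have e : h k m * σ * (h k m)⁻¹ = σ := by
    have := Equiv.swap_apply_apply (h k m) (-1) 1
    unfold σ
    rw [← this, h_apply, h_apply, if_neg (by omega), if_neg (by omega)]
  have e' : h k m * σ = σ * h k m := mul_inv_eq_iff_eq_mul.1 e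
  rw [mul_assoc, e', inv_mul_cancel_left]

open Classical in
theorem genCon_eq (g : Equiv.Perm ℤ) : MedScale.genCon S g =
    (1 / 3) * ((MedScale.wlen S (s⁻¹ * g * s) : ℝ) + ((MedScale.wlen S (s * g * s⁻¹) : ℝ) +
      (MedScale.wlen S (σ⁻¹ * g * σ) : ℝ))) := by
  have n1 : s ≠ s⁻¹ := fun hh => by
    have := congrArg (fun f : Equiv.Perm ℤ => f 1) hh
    simp [s_apply, s_inv_apply] at this
  have n2 : s ≠ σ := fun hh => by
    have := congrArg (fun f : Equiv.Perm ℤ => f 1) hh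
    simp [s_apply, σ] at this
  have n3 : s⁻¹ ≠ σ := fun hh => by
    have := congrArg (fun f : Equiv.Perm ℤ => f 2) hh
    simp only [s_inv_apply, σ] at this
    rw [Equiv.swap_apply_of_ne_of_ne (by omega) (by omega)] at this
    simp at this
  have e : S = ((({s, s⁻¹, σ} : Finset (Equiv.Perm ℤ))) : Set (Equiv.Perm ℤ)) := by
    simp [S]
  have c : Nat.card S = 3 := by
    rw [e, Nat.card_coe_set_eq, Set.ncard_coe_finset]
    exact Finset.card_eq_three.2 ⟨_, _, _, n1, n2, n3, rfl⟩
  unfold MedScale.genCon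
  rw [c]
  have : ∀ F : Equiv.Perm ℤ → ℝ, ∑ᶠ x ∈ S, F x = F s + (F s⁻¹ + F σ) := by
    intro F
    rw [e, finsum_mem_coe_finset, Finset.sum_insert (by simp [n1, n2]),
      Finset.sum_insert (by simp [n3]), Finset.sum_singleton]
  rw [this, inv_inv]
  norm_num

end Houghton

open Houghton in
/-- For `1 < m ≤ k`, the element `h_{k,m}` of Houghton's group `H₂`
has positive comparison curvature with respect to `{s, s⁻¹, σ}`. -/
theorem houghton_pos_curv (k m : ℕ) (h1 : 1 < m) (h2 : m ≤ k) :
    0 < MedScale.curv S (h k m) := by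
  have a := wlen_ge h1 h2
  have b := wlen_le (W_conj h1 h2)
  have c := wlen_le (W_conj' h1 h2)
  have b' : MedScale.wlen S (s⁻¹ * h k m * s) + 1 ≤ MedScale.wlen S (h k m) := by omega
  have c' : MedScale.wlen S (s * h k m * s⁻¹) + 1 ≤ MedScale.wlen S (h k m) := by omega
  have p : 0 < MedScale.wlen S (h k m) := by omega
  unfold MedScale.curv
  rw [genCon_eq, σ_comm h1]
  have p' : (0 : ℝ) < MedScale.wlen S (h k m) := by exact_mod_cast p
  have b'' : (MedScale.wlen S (s⁻¹ * h k m * s) : ℝ) + 1 ≤ MedScale.wlen S (h k m) := by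
    exact_mod_cast b'
  have c'' : (MedScale.wlen S (s * h k m * s⁻¹) : ℝ) + 1 ≤ MedScale.wlen S (h k m) := by
    exact_mod_cast c'
  apply div_pos _ p'
  linarith
end

section
/- For every integer r ≥ 1 there exist a constant c > 0 and N ∈ ℕ such that for all n ≥ N, each of the three sets {g ∈ B_n : κ_r^𝒮(g) > 0}, {g ∈ B_n : κ_r^𝒮(g) = 0} and {g ∈ B_n : κ_r^𝒮(g) < 0} in the discrete Heisenberg group H(ℤ) has cardinality at least c·|B_n|; that is, elements of positive, zero and negative spherical comparison curvature of radius r each have positive density in H(ℤ). -/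
/-- The discrete Heisenberg group `H(ℤ) = ⟨a, b ∣ [a,b] central⟩`, realized in
Mal'cev coordinates: the element `⟨A, B, C⟩` corresponds to `a^A b^B c^C` with
`c = [a,b]`; equivalently, the group of 3×3 upper unitriangular integer matrices. -/
@[ext] structure Heis where
  x : ℤ
  y : ℤ
  z : ℤ

namespace Heis

instance : Mul Heis := ⟨fun u v => ⟨u.x + v.x, u.y + v.y, u.z + v.z + u.x * v.y⟩⟩
instance : One Heis := ⟨⟨0, 0, 0⟩⟩
instance : Inv Heis := ⟨fun u => ⟨-u.x, -u.y, -u.z + u.x * u.y⟩⟩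

@[simp] lemma mul_x (u v : Heis) : (u * v).x = u.x + v.x := rfl
@[simp] lemma mul_y (u v : Heis) : (u * v).y = u.y + v.y := rfl
@[simp] lemma mul_z (u v : Heis) : (u * v).z = u.z + v.z + u.x * v.y := rfl
@[simp] lemma one_x : (1 : Heis).x = 0 := rfl
@[simp] lemma one_y : (1 : Heis).y = 0 := rfl
@[simp] lemma one_z : (1 : Heis).z = 0 := rfl
@[simp] lemma inv_x (u : Heis) : u⁻¹.x = -u.x := rfl
@[simp] lemma inv_y (u : Heis) : u⁻¹.y = -u.y := rfl
@[simp] lemma inv_z (u : Heis) : u⁻¹.z = -u.z + u.x * u.y := rfl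

instance : Group Heis where
  mul_assoc u v w := by ext <;> simp <;> ring
  one_mul u := by ext <;> simp
  mul_one u := by ext <;> simp
  inv_mul_cancel u := by ext <;> simp <;> ring

/-- The generator `a` of `H(ℤ)`. -/
def a : Heis := ⟨1, 0, 0⟩

/-- The generator `b` of `H(ℤ)`. -/
def b : Heis := ⟨0, 1, 0⟩

/-- The standard symmetric generating set `S = {a, a⁻¹, b, b⁻¹}` of `H(ℤ)`. -/
def S : Set Heis := {a, a⁻¹, b, b⁻¹}

end Heis

namespace Heis
open MedScale

lemma ext_iff3 (g : Heis) (x y z : ℤ) : g = ⟨x, y, z⟩ ↔ g.x = x ∧ g.y = y ∧ g.z = z := by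
  constructor
  · rintro rfl; exact ⟨rfl, rfl, rfl⟩
  · rintro ⟨rfl, rfl, rfl⟩; rfl

lemma a_zpow (n : ℤ) : a ^ n = ⟨n, 0, 0⟩ := by
  induction n using Int.induction_on with
  | zero => rfl
  | succ i ih => rw [zpow_add_one, ih]; ext <;> simp [a]
  | pred i ih => rw [zpow_sub_one, ih]; ext <;> simp [a]; ring

lemma b_zpow (n : ℤ) : b ^ n = ⟨0, n, 0⟩ := by
  induction n using Int.induction_on with
  | zero => rfl
  | succ i ih => rw [zpow_add_one, ih]; ext <;> simp [b]
  | pred i ih => rw [zpow_sub_one, ih]; ext <;> simp [b]; ring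

/-- `g` is represented by a word of length `n`. -/
def Rep (g : Heis) (n : ℕ) : Prop :=
  ∃ l : List Heis, (∀ x ∈ l, x ∈ S) ∧ l.prod = g ∧ l.length = n

lemma Rep.mul {g h : Heis} {m n : ℕ} (hg : Rep g m) (hh : Rep h n) : Rep (g * h) (m + n) := by
  obtain ⟨l, h1, h2, h3⟩ := hg
  obtain ⟨l', h1', h2', h3'⟩ := hh
  refine ⟨l ++ l', ?_, by simp [h2, h2'], by simp [h3, h3']⟩
  intro x hx
  rcases List.mem_append.1 hx with h | h
  · exact h1 x h
  · exact h1' x h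

lemma inv_mem_S {x : Heis} (hx : x ∈ S) : x⁻¹ ∈ S := by
  simp only [S, Set.mem_insert_iff, Set.mem_singleton_iff] at hx ⊢
  rcases hx with rfl | rfl | rfl | rfl <;> simp

lemma Rep.inv {g : Heis} {m : ℕ} (hg : Rep g m) : Rep g⁻¹ m := by
  obtain ⟨l, h1, h2, h3⟩ := hg
  refine ⟨(l.map fun x => x⁻¹).reverse, ?_, ?_, by simp [h3]⟩
  · intro x hx
    simp only [List.mem_reverse, List.mem_map] at hx
    obtain ⟨y, hy, rfl⟩ := hx
    exact inv_mem_S (h1 y hy)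
  · rw [← h2, List.prod_inv_reverse]

lemma Rep.one : Rep 1 0 := ⟨[], by simp, rfl, rfl⟩

lemma Rep.of_mem {g : Heis} (hg : g ∈ S) : Rep g 1 := ⟨[g], by simpa using hg, by simp, rfl⟩

lemma Rep.pow {g : Heis} (hg : g ∈ S) (n : ℕ) : Rep (g ^ n) n := by
  induction n with
  | zero => simpa using Rep.one
  | succ n ih => rw [pow_succ]; exact ih.mul (Rep.of_mem hg)

lemma Rep.zpow {g : Heis} (hg : g ∈ S) (n : ℤ) : Rep (g ^ n) n.natAbs := by
  obtain ⟨m, rfl | rfl⟩ := Int.eq_nat_or_neg n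
  · simpa using Rep.pow hg m
  · simpa using (Rep.pow hg m).inv

lemma a_mem : a ∈ S := by simp [S]
lemma b_mem : b ∈ S := by simp [S]

lemma exists_rep (g : Heis) : ∃ n, Rep g n := by
  have ha : ∀ n : ℤ, ∃ m, Rep ⟨n, 0, 0⟩ m := fun n => ⟨_, a_zpow n ▸ Rep.zpow a_mem n⟩
  have hb : ∀ n : ℤ, ∃ m, Rep ⟨0, n, 0⟩ m := fun n => ⟨_, b_zpow n ▸ Rep.zpow b_mem n⟩
  obtain ⟨m1, h1⟩ := ha 1
  obtain ⟨m2, h2⟩ := hb (g.z)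
  obtain ⟨m3, h3⟩ := ha (-1)
  obtain ⟨m4, h4⟩ := hb (g.y - g.z)
  obtain ⟨m5, h5⟩ := ha (g.x)
  have := (((h1.mul h2).mul h3).mul h4).mul h5
  refine ⟨m1 + m2 + m3 + m4 + m5, ?_⟩
  convert this using 1
  ext <;> simp

lemma rep_wlen (g : Heis) : Rep g (wlen S g) := Nat.sInf_mem (exists_rep g)

lemma wlen_le {g : Heis} {n : ℕ} (h : Rep g n) : wlen S g ≤ n := Nat.sInf_le h

/-- Invariant satisfied by all words. -/
lemma word_bound {P : Heis → ℤ → Prop} (h0 : P 1 0)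
    (h1 : ∀ g n, P g n → P (g * a) (n + 1)) (h2 : ∀ g n, P g n → P (g * a⁻¹) (n + 1))
    (h3 : ∀ g n, P g n → P (g * b) (n + 1)) (h4 : ∀ g n, P g n → P (g * b⁻¹) (n + 1))
    (g : Heis) : P g (wlen S g) := by
  obtain ⟨l, hl, hp, hn⟩ := rep_wlen g
  rw [← hn, ← hp]
  clear hn hp
  induction l using List.reverseRecOn with
  | nil => simpa using h0
  | append_singleton l x ih =>
    have ih := ih (fun y hy => hl y (by simp [hy]))
    have hx : x ∈ S := hl x (by simp)
    simp only [S, Set.mem_insert_iff, Set.mem_singleton_iff] at hx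
    simp only [List.prod_append, List.prod_singleton, List.length_append, List.length_singleton,
      Nat.cast_add, Nat.cast_one]
    rcases hx with rfl | rfl | rfl | rfl
    · exact h1 _ _ ih
    · exact h2 _ _ ih
    · exact h3 _ _ ih
    · exact h4 _ _ ih

lemma abs_bound (g : Heis) : |g.x| + |g.y| ≤ wlen S g := by
  apply word_bound (P := fun g n => |g.x| + |g.y| ≤ n)
  · simp
  all_goals
    intro g n h
    simp [a, b]
    grind

lemma z_bound (g : Heis) : |g.x| ≤ wlen S g ∧ |g.z| ≤ (wlen S g : ℤ) ^ 2 := by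
  apply word_bound (P := fun g n => |g.x| ≤ n ∧ |g.z| ≤ n ^ 2)
  · simp
  all_goals
    rintro g n ⟨h, h'⟩
    have := abs_nonneg g.x
    simp [a, b]
    rw [abs_le] at *
    constructor
    · constructor <;> linarith
    · rw [abs_le] at *
      constructor <;> nlinarith

lemma area_bound (g : Heis) : ∃ β f U D : ℤ, 0 ≤ β ∧ g.x ≤ β ∧ 0 ≤ f ∧ -f ≤ g.x ∧ 0 ≤ U ∧ 0 ≤ D ∧
    U - D = g.y ∧ g.z ≤ U * β + D * f ∧ 2 * β + 2 * f - |g.x| + U + D ≤ wlen S g := by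
  apply word_bound (P := fun g n => ∃ β f U D : ℤ, 0 ≤ β ∧ g.x ≤ β ∧ 0 ≤ f ∧ -f ≤ g.x ∧ 0 ≤ U ∧
    0 ≤ D ∧ U - D = g.y ∧ g.z ≤ U * β + D * f ∧ 2 * β + 2 * f - |g.x| + U + D ≤ n)
  · exact ⟨0, 0, 0, 0, by simp⟩
  · rintro g n ⟨β, f, U, D, h1, h2, h3, h4, h5, h6, h7, h8, h9⟩
    by_cases hc : g.x + 1 ≤ β
    · refine ⟨β, f, U, D, h1, ?_, h3, ?_, h5, h6, ?_, ?_, ?_⟩ <;> simp [a] <;> grind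
    · refine ⟨β + 1, f, U, D, by linarith, ?_, h3, ?_, h5, h6, ?_, ?_, ?_⟩ <;> simp [a] <;>
        first | nlinarith | grind
  · rintro g n ⟨β, f, U, D, h1, h2, h3, h4, h5, h6, h7, h8, h9⟩
    by_cases hc : -f ≤ g.x - 1
    · refine ⟨β, f, U, D, h1, ?_, h3, ?_, h5, h6, ?_, ?_, ?_⟩ <;> simp [a] <;> grind
    · refine ⟨β, f + 1, U, D, by linarith, ?_, by linarith, ?_, h5, h6, ?_, ?_, ?_⟩ <;>
        simp [a] <;> first | nlinarith | grind
  · rintro g n ⟨β, f, U, D, h1, h2, h3, h4, h5, h6, h7, h8, h9⟩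
    refine ⟨β, f, U + 1, D, h1, ?_, h3, ?_, by linarith, h6, ?_, ?_, ?_⟩ <;> simp [b] <;>
      first | linarith | nlinarith
  · rintro g n ⟨β, f, U, D, h1, h2, h3, h4, h5, h6, h7, h8, h9⟩
    refine ⟨β, f, U, D + 1, h1, ?_, h3, ?_, h5, by linarith, ?_, ?_, ?_⟩ <;> simp [b] <;>
      first | linarith | nlinarith

lemma wlen_upper (x y k t : ℤ) (hk : 1 ≤ k) (ht : 0 ≤ t) (htx : t ≤ x) :
    (wlen S ⟨x, y, k * x - t⟩ : ℤ) ≤ |y - k| + x + k := by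
  have h := ((((Rep.zpow b_mem (y - k)).mul (Rep.zpow a_mem (x - t))).mul (Rep.zpow b_mem 1)).mul
    (Rep.zpow a_mem t)).mul (Rep.zpow b_mem (k - 1))
  simp only [a_zpow, b_zpow] at h
  have e : (⟨0, y - k, 0⟩ * ⟨x - t, 0, 0⟩ * ⟨0, 1, 0⟩ * ⟨t, 0, 0⟩ * ⟨0, k - 1, 0⟩ : Heis)
      = ⟨x, y, k * x - t⟩ := by
    ext <;> simp
    ring
  rw [e] at h
  have := wlen_le h
  have h2 : ((wlen S ⟨x, y, k * x - t⟩ : ℕ) : ℤ) ≤ ((y - k).natAbs + (x - t).natAbs +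
    (1 : ℤ).natAbs + t.natAbs + (k - 1).natAbs : ℕ) := by exact_mod_cast this
  refine h2.trans ?_
  grind

/-- Length in the flat region. -/
lemma wlen_flat (x y z : ℤ) (hx : 0 < x) (hz : 0 < z) (hzy : z ≤ x * y) :
    (wlen S ⟨x, y, z⟩ : ℤ) = x + y := by
  have hy : 0 < y := by by_contra hc; nlinarith
  obtain ⟨k, t, h1, h2, h3⟩ : ∃ k t : ℤ, z = k * x - t ∧ 0 ≤ t ∧ t < x := by
    refine ⟨-((-z) / x), (-z) % x, ?_, Int.emod_nonneg _ hx.ne', Int.emod_lt_of_pos _ hx⟩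
    have := Int.emod_add_mul_ediv (-z) x
    linarith
  have hk : 1 ≤ k := by by_contra hc; nlinarith
  have hky : k ≤ y := by by_contra hc; nlinarith
  have hu := wlen_upper x y k t hk h2 h3.le
  have hl := abs_bound ⟨x, y, z⟩
  rw [h1] at *
  simp only at hl
  grind

/-- Length in the tall region. -/
lemma wlen_tall (x y k t : ℤ) (hk : 1 ≤ k) (hy : 0 ≤ y) (hyk : y ≤ k) (hkx : k ≤ x + 1)
    (ht : 0 ≤ t) (htx : t < x) :
    (wlen S ⟨x, y, k * x - t⟩ : ℤ) = 2 * k + x - y := by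
  have hu := wlen_upper x y k t hk ht htx.le
  obtain ⟨β, f, U, D, h1, h2, h3, h4, h5, h6, h7, h8, h9⟩ := area_bound ⟨x, y, k * x - t⟩
  simp only at h2 h4 h7 h8 h9
  rw [abs_of_nonneg (by linarith : 0 ≤ x)] at h9
  rw [abs_of_nonpos (by linarith)] at hu
  have key : k ≤ (β - x + f) + U := by
    by_contra hc
    push Not at hc
    have hE : 0 ≤ β - x + f := by linarith
    have e1 : D * f ≤ U * f := mul_le_mul_of_nonneg_right (by linarith) h3
    have e2 : U * (β + f) ≤ (k - 1 - (β - x + f)) * (β + f) :=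
      mul_le_mul_of_nonneg_right (by linarith) (by linarith)
    have e3 : 0 ≤ (β - x + f) * (x + (β - x + f) - (k - 1)) :=
      mul_nonneg hE (by linarith)
    nlinarith
  linarith

lemma conj_eq (x y z : ℤ) (w : Heis) : w⁻¹ * ⟨x, y, z⟩ * w = ⟨x, y, z + x * w.y - w.x * y⟩ := by
  ext <;> simp
  ring

lemma ball_subset (n : ℕ) : ball S n ⊆ (fun p : ℤ × ℤ × ℤ => (⟨p.1, p.2.1, p.2.2⟩ : Heis)) ''
    (↑(Finset.Icc (-(n : ℤ)) n ×ˢ Finset.Icc (-(n : ℤ)) n ×ˢ Finset.Icc (-(n : ℤ) ^ 2) (n ^ 2)) :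
      Set (ℤ × ℤ × ℤ)) := by
  intro g hg
  have hg : (wlen S g : ℤ) ≤ n := by exact_mod_cast hg
  have h1 := abs_bound g
  have h2 := (z_bound g).2
  have h0 : (0 : ℤ) ≤ wlen S g := by positivity
  have h3 : (wlen S g : ℤ) ^ 2 ≤ (n : ℤ) ^ 2 := by gcongr
  have h4 := abs_nonneg g.x
  have h5 := abs_nonneg g.y
  refine ⟨(g.x, g.y, g.z), ?_, rfl⟩
  simp only [Finset.coe_product, Set.mem_prod, Finset.coe_Icc, Set.mem_Icc]
  have hx : |g.x| ≤ n := by linarith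
  have hy : |g.y| ≤ n := by linarith
  exact ⟨abs_le.1 hx, abs_le.1 hy, abs_le.1 (h2.trans h3)⟩

lemma ball_finite (n : ℕ) : (ball S n).Finite :=
  ((Finset.finite_toSet _).image _).subset (ball_subset n)

lemma ball_card (n : ℕ) (hn : 1 ≤ n) : Nat.card (ball S n) ≤ 27 * n ^ 4 := by
  have h1 := Set.ncard_le_ncard (ball_subset n) ((Finset.finite_toSet _).image _)
  have h2 := h1.trans (Set.ncard_image_le (Finset.finite_toSet _))
  rw [Set.ncard_coe_finset] at h2
  simp only [Finset.card_product, Int.card_Icc] at h2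
  rw [Nat.card_coe_set_eq]
  refine h2.trans ?_
  have e1 : ((n : ℤ) + 1 - -(n : ℤ)).toNat = 2 * n + 1 := by omega
  have e2 : ((n : ℤ) ^ 2 + 1 - -(n : ℤ) ^ 2).toNat = 2 * n ^ 2 + 1 := by
    have : ((n : ℤ) ^ 2 + 1 - -(n : ℤ) ^ 2) = ((2 * n ^ 2 + 1 : ℕ) : ℤ) := by push_cast; ring
    rw [this, Int.toNat_natCast]
  rw [e1, e2]
  have f1 : 2 * n + 1 ≤ 3 * n := by omega
  have f2 : 2 * n ^ 2 + 1 ≤ 3 * n ^ 2 := by nlinarith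
  calc (2 * n + 1) * ((2 * n + 1) * (2 * n ^ 2 + 1)) ≤ (3 * n) * ((3 * n) * (3 * n ^ 2)) := by gcongr
    _ = 27 * n ^ 4 := by ring

lemma sphere_finite (r : ℕ) : (sphere S r).Finite :=
  (ball_finite r).subset (fun g hg => le_of_eq hg)

lemma wlen_inv (g : Heis) : wlen S g⁻¹ = wlen S g := by
  apply le_antisymm
  · exact wlen_le (rep_wlen g).inv
  · simpa using wlen_le (rep_wlen g⁻¹).inv

lemma apow_mem_sphere (r : ℕ) : (⟨r, 0, 0⟩ : Heis) ∈ sphere S r := by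
  have h1 := wlen_le (Rep.zpow a_mem r)
  rw [a_zpow] at h1
  have h2 := abs_bound ⟨r, 0, 0⟩
  simp at h1 h2
  exact le_antisymm h1 h2

lemma aneg_mem_sphere (r : ℕ) : (⟨-r, 0, 0⟩ : Heis) ∈ sphere S r := by
  have := apow_mem_sphere r
  have e : (⟨-r, 0, 0⟩ : Heis) = (⟨r, 0, 0⟩ : Heis)⁻¹ := by ext <;> simp
  rw [e]
  exact (wlen_inv _).trans this

/-- The sphere as a finset. -/
noncomputable def sph (r : ℕ) : Finset Heis := (sphere_finite r).toFinset

lemma mem_sph {r : ℕ} {w : Heis} : w ∈ sph r ↔ wlen S w = r := by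
  simp [sph, sphere]

lemma sum_y (r : ℕ) : ∑ w ∈ sph r, w.y = 0 := by
  have : ∑ w ∈ sph r, w.y = ∑ w ∈ sph r, -w.y := by
    refine Finset.sum_nbij' (fun w => w⁻¹) (fun w => w⁻¹) ?_ ?_ ?_ ?_ ?_ <;>
      simp [mem_sph, wlen_inv]
  rw [Finset.sum_neg_distrib] at this
  linarith

lemma sphereDist_eq (r : ℕ) (g : Heis) : sphereDist S r g =
    ((∑ w ∈ sph r, (wlen S (w⁻¹ * g * w) : ℤ) : ℤ) : ℝ) / ((sph r).card : ℝ) := by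
  unfold sphereDist
  rw [finsum_mem_eq_finite_toFinset_sum _ (sphere_finite r), Nat.card_coe_set_eq,
    Set.ncard_eq_toFinset_card _ (sphere_finite r)]
  push_cast
  rw [div_mul_eq_mul_div, one_mul]
  rfl

lemma sph_card_pos (r : ℕ) : 0 < (sph r).card :=
  Finset.card_pos.2 ⟨_, mem_sph.2 (apow_mem_sphere r)⟩

/-- Curvature in terms of an integer sum. -/
lemma curv_eq (r : ℕ) (g : Heis) : sphereCurv S r g =
    ((∑ w ∈ sph r, ((wlen S g : ℤ) + 2 * w.y - wlen S (w⁻¹ * g * w)) : ℤ) : ℝ) /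
      ((sph r).card : ℝ) / (wlen S g : ℝ) := by
  have h := sph_card_pos r
  unfold sphereCurv
  rw [sphereDist_eq, Finset.sum_sub_distrib, Finset.sum_add_distrib, ← Finset.mul_sum, sum_y]
  simp
  field_simp

lemma mem_sph_bound {r : ℕ} {w : Heis} (hw : w ∈ sph r) : |w.x| + |w.y| ≤ r := by
  have := abs_bound w
  rwa [mem_sph.1 hw] at this

lemma curv_zero (r : ℕ) (x y z : ℤ) (hx : 0 < x) (hy : 0 < y) (hz : r * (x + y) < z)
    (hz2 : z + r * (x + y) ≤ x * y) : sphereCurv S r ⟨x, y, z⟩ = 0 := by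
  rw [curv_eq]
  have : ∑ w ∈ sph r, ((wlen S ⟨x, y, z⟩ : ℤ) + 2 * w.y - wlen S (w⁻¹ * ⟨x, y, z⟩ * w)) =
      ∑ w ∈ sph r, 2 * w.y := by
    refine Finset.sum_congr rfl fun w hw => ?_
    have hb := mem_sph_bound hw
    have hr : (0 : ℤ) ≤ r := by positivity
    have a1 := abs_nonneg w.x
    have a2 := abs_nonneg w.y
    have b1 : |w.x| ≤ r := by linarith
    have b2 : |w.y| ≤ r := by linarith
    rw [abs_le] at b1 b2
    rw [conj_eq, wlen_flat x y z hx (by nlinarith) (by nlinarith),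
      wlen_flat x y _ hx (by nlinarith) (by nlinarith)]
    ring
  rw [this, ← Finset.mul_sum, sum_y]
  simp

lemma wlen_pos_of_x {g : Heis} (hx : 0 < g.x) : (0 : ℝ) < wlen S g := by
  have h := abs_bound g
  have : (0 : ℤ) < wlen S g := by
    have := abs_pos.2 hx.ne'
    have := abs_nonneg g.y
    linarith
  exact_mod_cast this

lemma curv_pos (r : ℕ) (hr : 1 ≤ r) (x y k t : ℤ) (hx : 0 < x) (hy : 0 < y)
    (hyk : y + r + 2 ≤ k) (hkx : k + r + 2 ≤ x) (hyx : (r + 1) * y ≤ x)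
    (ht : x - y ≤ t) (htx : t < x) : 0 < sphereCurv S r ⟨x, y, k * x - t⟩ := by
  rw [curv_eq]
  have hc := sph_card_pos r
  have hr' : (1 : ℤ) ≤ r := by exact_mod_cast hr
  have t0 : 0 ≤ t := by nlinarith
  have key : ∀ w ∈ sph r, (wlen S ⟨x, y, k * x - t⟩ : ℤ) + 2 * w.y -
      wlen S (w⁻¹ * ⟨x, y, k * x - t⟩ * w) = if x ≤ t + w.x * y then 2 else 0 := by
    intro w hw
    have hb := mem_sph_bound hw
    have a1 := abs_nonneg w.x
    have a2 := abs_nonneg w.y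
    have b1 : |w.x| ≤ r := by linarith
    have b2 : |w.y| ≤ r := by linarith
    rw [abs_le] at b1 b2
    have c1 : w.x * y ≤ r * y := mul_le_mul_of_nonneg_right b1.2 hy.le
    have c2 : -r * y ≤ w.x * y := mul_le_mul_of_nonneg_right b1.1 hy.le
    rw [conj_eq, wlen_tall x y k t (by linarith) hy.le (by linarith) (by linarith) t0 htx]
    split_ifs with hif
    · have e : k * x - t + x * w.y - w.x * y = (k + w.y - 1) * x - (t + w.x * y - x) := by ring
      rw [e, wlen_tall x y _ _ (by linarith) hy.le (by linarith) (by linarith) (by linarith)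
        (by linarith)]
      ring
    · have e : k * x - t + x * w.y - w.x * y = (k + w.y) * x - (t + w.x * y) := by ring
      rw [e, wlen_tall x y _ _ (by linarith) hy.le (by linarith) (by linarith) (by linarith)
        (by linarith)]
      ring
  rw [Finset.sum_congr rfl key]
  have hs : 0 < ∑ w ∈ sph r, (if x ≤ t + w.x * y then (2 : ℤ) else 0) := by
    refine Finset.sum_pos' (fun w _ => by split_ifs <;> norm_num)
      ⟨_, mem_sph.2 (apow_mem_sphere r), ?_⟩
    rw [if_pos (by simp only; nlinarith)]
    norm_num
  have hw := wlen_pos_of_x (g := ⟨x, y, k * x - t⟩) hx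
  have hs' : (0 : ℝ) < ((∑ w ∈ sph r, (if x ≤ t + w.x * y then (2 : ℤ) else 0) : ℤ) : ℝ) :=
    Int.cast_pos.2 hs
  have hc' : (0 : ℝ) < (sph r).card := Nat.cast_pos.2 hc
  exact div_pos (div_pos hs' hc') hw

lemma curv_neg (r : ℕ) (hr : 1 ≤ r) (x y k t : ℤ) (hx : 0 < x) (hy : 0 < y)
    (hyk : y + r + 2 ≤ k) (hkx : k + r + 2 ≤ x) (hyx : (r + 1) * y ≤ x)
    (ht : 0 ≤ t) (hty : t < y) : sphereCurv S r ⟨x, y, k * x - t⟩ < 0 := by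
  rw [curv_eq]
  have hc := sph_card_pos r
  have hr' : (1 : ℤ) ≤ r := by exact_mod_cast hr
  have htx : t < x := by nlinarith
  have key : ∀ w ∈ sph r, (wlen S ⟨x, y, k * x - t⟩ : ℤ) + 2 * w.y -
      wlen S (w⁻¹ * ⟨x, y, k * x - t⟩ * w) = if t + w.x * y < 0 then -2 else 0 := by
    intro w hw
    have hb := mem_sph_bound hw
    have a1 := abs_nonneg w.x
    have a2 := abs_nonneg w.y
    have b1 : |w.x| ≤ r := by linarith
    have b2 : |w.y| ≤ r := by linarith
    rw [abs_le] at b1 b2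
    have c1 : w.x * y ≤ r * y := mul_le_mul_of_nonneg_right b1.2 hy.le
    have c2 : -r * y ≤ w.x * y := mul_le_mul_of_nonneg_right b1.1 hy.le
    rw [conj_eq, wlen_tall x y k t (by linarith) hy.le (by linarith) (by linarith) ht htx]
    split_ifs with hif
    · have e : k * x - t + x * w.y - w.x * y = (k + w.y + 1) * x - (t + w.x * y + x) := by ring
      rw [e, wlen_tall x y _ _ (by linarith) hy.le (by linarith) (by linarith) (by linarith)
        (by linarith)]
      ring
    · have e : k * x - t + x * w.y - w.x * y = (k + w.y) * x - (t + w.x * y) := by ring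
      rw [e, wlen_tall x y _ _ (by linarith) hy.le (by linarith) (by linarith) (by linarith)
        (by linarith)]
      ring
  rw [Finset.sum_congr rfl key]
  have hs : ∑ w ∈ sph r, (if t + w.x * y < 0 then (-2 : ℤ) else 0) < 0 := by
    refine Finset.sum_neg' (fun w _ => by split_ifs <;> norm_num)
      ⟨_, mem_sph.2 (aneg_mem_sphere r), ?_⟩
    rw [if_pos (by simp only; nlinarith)]
    norm_num
  have hw := wlen_pos_of_x (g := ⟨x, y, k * x - t⟩) hx
  have hs' : ((∑ w ∈ sph r, (if t + w.x * y < 0 then (-2 : ℤ) else 0) : ℤ) : ℝ) < 0 :=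
    Int.cast_lt_zero.2 hs
  have hc' : (0 : ℝ) < (sph r).card := Nat.cast_pos.2 hc
  exact div_neg_of_neg_of_pos (div_neg_of_neg_of_pos hs' hc') hw

/-- Counting: an injective family indexed by `[0,s)^4`. -/
lemma count (s : ℕ) (A : Set Heis) (hA : A.Finite) (f : ℤ → ℤ → ℤ → ℤ → Heis)
    (hf : ∀ i j k l : ℤ, 0 ≤ i → i < s → 0 ≤ j → j < s → 0 ≤ k → k < s → 0 ≤ l → l < s →
      f i j k l ∈ A)
    (hinj : ∀ i j k l i' j' k' l' : ℤ, 0 ≤ i → i < s → 0 ≤ j → j < s → 0 ≤ k → k < s →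
      0 ≤ l → l < s → 0 ≤ i' → i' < s → 0 ≤ j' → j' < s → 0 ≤ k' → k' < s →
      0 ≤ l' → l' < s → f i j k l = f i' j' k' l' → i = i' ∧ j = j' ∧ k = k' ∧ l = l') :
    s ^ 4 ≤ Nat.card A := by
  let T : Finset (ℤ × ℤ × ℤ × ℤ) :=
    Finset.Ico 0 (s : ℤ) ×ˢ Finset.Ico 0 (s : ℤ) ×ˢ Finset.Ico 0 (s : ℤ) ×ˢ Finset.Ico 0 (s : ℤ)
  have hT : T.card = s ^ 4 := by
    simp [T, Finset.card_product]; ring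
  have := Set.ncard_le_ncard_of_injOn (s := (T : Set (ℤ × ℤ × ℤ × ℤ))) (t := A)
    (fun p => f p.1 p.2.1 p.2.2.1 p.2.2.2) ?_ ?_ hA
  · rw [Set.ncard_coe_finset, hT] at this
    rwa [Nat.card_coe_set_eq]
  · rintro ⟨i, j, k, l⟩ h
    simp [T] at h
    exact hf _ _ _ _ h.1.1 h.1.2 h.2.1.1 h.2.1.2 h.2.2.1.1 h.2.2.1.2 h.2.2.2.1 h.2.2.2.2
  · rintro ⟨i, j, k, l⟩ h ⟨i', j', k', l'⟩ h' e
    simp [T] at h h'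
    have := hinj _ _ _ _ _ _ _ _ h.1.1 h.1.2 h.2.1.1 h.2.1.2 h.2.2.1.1 h.2.2.1.2 h.2.2.2.1
      h.2.2.2.2 h'.1.1 h'.1.2 h'.2.1.1 h'.2.1.2 h'.2.2.1.1 h'.2.2.1.2 h'.2.2.2.1 h'.2.2.2.2 e
    simp [this]

/-- Uniqueness of ceiling division. -/
lemma ceil_unique {x k t k' t' : ℤ} (ht : 0 ≤ t) (htx : t < x) (ht' : 0 ≤ t') (htx' : t' < x)
    (h : k * x - t = k' * x - t') : k = k' ∧ t = t' := by
  have hk : k = k' := by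
    rcases lt_trichotomy k k' with h1 | h1 | h1
    · nlinarith
    · exact h1
    · nlinarith
  subst hk
  exact ⟨rfl, by linarith⟩

lemma mem_ball_of {g : Heis} {n : ℕ} {m : ℤ} (h : (wlen S g : ℤ) = m) (hm : m ≤ n) :
    g ∈ ball S n := by
  have : (wlen S g : ℤ) ≤ n := h ▸ hm
  exact_mod_cast this

lemma count_zero (r n s : ℕ) (hs : 2 * r + 3 ≤ s) (hn : 32 * (r + 1) * s ≤ n) :
    s ^ 4 ≤ Nat.card {g ∈ ball S n | sphereCurv S r g = 0} := by
  have hs' : (2 * r + 3 : ℤ) ≤ s := by exact_mod_cast hs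
  have hn' : (32 * (r + 1) * s : ℤ) ≤ n := by exact_mod_cast hn
  have hr0 : (0 : ℤ) ≤ r := by positivity
  obtain ⟨M, hM⟩ : ∃ M : ℤ, M = 8 * (r + 1) * s := ⟨_, rfl⟩
  have hMs : 8 * (s : ℤ) ≤ M := by rw [hM]; nlinarith
  refine count s _ ((ball_finite n).subset (fun g hg => hg.1))
    (fun i j k l => ⟨M + i, M + j, s * M + (k * s + l) + 1⟩) ?_ ?_
  · intro i j k l hi his hj hjs hk hks hl hls
    have e0 : k * s + l + 1 ≤ s * s := by nlinarith
    have e1 : 0 ≤ k * s + l := by positivity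
    have e2 : (r : ℤ) * ((M + i) + (M + j)) ≤ s * M := by nlinarith
    have e3 : (s : ℤ) * s ≤ s * M := by nlinarith
    have e4 : 8 * (s : ℤ) * M ≤ M * M := by nlinarith
    have e5 : M * M ≤ (M + i) * (M + j) := by nlinarith
    have e6 : 0 ≤ (s : ℤ) * M := by nlinarith
    refine ⟨mem_ball_of (wlen_flat _ _ _ (by linarith) (by linarith) (by linarith)) ?_, ?_⟩
    · linarith
    · exact curv_zero r _ _ _ (by linarith) (by linarith) (by linarith) (by linarith)
  · intro i j k l i' j' k' l' hi his hj hjs hk hks hl hls hi' his' hj' hjs' hk' hks' hl' hls' h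
    simp only [Heis.mk.injEq] at h
    obtain ⟨h1, h2, h3⟩ := h
    have := ceil_unique (x := s) (k := -k) (k' := -k') hl hls hl' hls' (by linarith)
    refine ⟨by linarith, by linarith, by linarith, by linarith⟩

lemma count_pos (r n s : ℕ) (hr : 1 ≤ r) (hs : 2 * r + 3 ≤ s) (hn : 32 * (r + 1) * s ≤ n) :
    s ^ 4 ≤ Nat.card {g ∈ ball S n | 0 < sphereCurv S r g} := by
  have hs' : (2 * r + 3 : ℤ) ≤ s := by exact_mod_cast hs
  have hn' : (32 * (r + 1) * s : ℤ) ≤ n := by exact_mod_cast hn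
  have hr0 : (0 : ℤ) ≤ r := by positivity
  obtain ⟨M, hM⟩ : ∃ M : ℤ, M = 8 * (r + 1) * s := ⟨_, rfl⟩
  have hMs : 8 * (s : ℤ) ≤ M := by rw [hM]; nlinarith
  refine count s _ ((ball_finite n).subset (fun g hg => hg.1))
    (fun i j k l => ⟨M + i, s + j, (3 * s + k) * (M + i) - (M + i - 1 - l)⟩) ?_ ?_
  · intro i j k l hi his hj hjs hk hks hl hls
    refine ⟨mem_ball_of (wlen_tall _ _ _ _ (by linarith) (by linarith) (by linarith) (by linarith)
      (by linarith) (by linarith)) (by linarith), ?_⟩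
    exact curv_pos r hr _ _ _ _ (by linarith) (by linarith) (by linarith) (by linarith)
      (by nlinarith) (by linarith) (by linarith)
  · intro i j k l i' j' k' l' hi his hj hjs hk hks hl hls hi' his' hj' hjs' hk' hks' hl' hls' h
    simp only [Heis.mk.injEq] at h
    obtain ⟨h1, h2, h3⟩ := h
    have hii : i = i' := by linarith
    subst hii
    have := ceil_unique (x := M + i) (by linarith) (by linarith) (by linarith) (by linarith) h3
    refine ⟨by linarith, by linarith, by linarith, by linarith⟩

lemma count_neg (r n s : ℕ) (hr : 1 ≤ r) (hs : 2 * r + 3 ≤ s) (hn : 32 * (r + 1) * s ≤ n) :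
    s ^ 4 ≤ Nat.card {g ∈ ball S n | sphereCurv S r g < 0} := by
  have hs' : (2 * r + 3 : ℤ) ≤ s := by exact_mod_cast hs
  have hn' : (32 * (r + 1) * s : ℤ) ≤ n := by exact_mod_cast hn
  have hr0 : (0 : ℤ) ≤ r := by positivity
  obtain ⟨M, hM⟩ : ∃ M : ℤ, M = 8 * (r + 1) * s := ⟨_, rfl⟩
  have hMs : 8 * (s : ℤ) ≤ M := by rw [hM]; nlinarith
  refine count s _ ((ball_finite n).subset (fun g hg => hg.1))
    (fun i j k l => ⟨M + i, s + j, (3 * s + k) * (M + i) - l⟩) ?_ ?_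
  · intro i j k l hi his hj hjs hk hks hl hls
    refine ⟨mem_ball_of (wlen_tall _ _ _ _ (by linarith) (by linarith) (by linarith) (by linarith)
      (by linarith) (by linarith)) (by linarith), ?_⟩
    exact curv_neg r hr _ _ _ _ (by linarith) (by linarith) (by linarith) (by linarith)
      (by nlinarith) (by linarith) (by linarith)
  · intro i j k l i' j' k' l' hi his hj hjs hk hks hl hls hi' his' hj' hjs' hk' hks' hl' hls' h
    simp only [Heis.mk.injEq] at h
    obtain ⟨h1, h2, h3⟩ := h
    have hii : i = i' := by linarith
    subst hii
    have := ceil_unique (x := M + i) (by linarith) (by linarith) (by linarith) (by linarith) h3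
    refine ⟨by linarith, by linarith, by linarith, by linarith⟩

end Heis

/-- For every radius `r ≥ 1`, elements of positive, zero and negative
spherical comparison curvature of radius `r` each have positive density in the discrete
Heisenberg group `H(ℤ)`: there are `c > 0` and `N` such that for all `n ≥ N` each of the
three sets has cardinality at least `c·|B_n|`. -/
theorem heisenberg_three_signs_positive_density (r : ℕ) (hr : 1 ≤ r) :
    ∃ c : ℝ, 0 < c ∧ ∃ N : ℕ, ∀ n : ℕ, N ≤ n →
      c * (Nat.card (MedScale.ball Heis.S n) : ℝ) ≤
        (Nat.card {g ∈ MedScale.ball Heis.S n | 0 < MedScale.sphereCurv Heis.S r g} : ℝ) ∧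
      c * (Nat.card (MedScale.ball Heis.S n) : ℝ) ≤
        (Nat.card {g ∈ MedScale.ball Heis.S n | MedScale.sphereCurv Heis.S r g = 0} : ℝ) ∧
      c * (Nat.card (MedScale.ball Heis.S n) : ℝ) ≤
        (Nat.card {g ∈ MedScale.ball Heis.S n | MedScale.sphereCurv Heis.S r g < 0} : ℝ) := by
  have hRpos : (0 : ℝ) < 27 * (64 * ((r : ℝ) + 1)) ^ 4 := by positivity
  refine ⟨1 / (27 * (64 * ((r : ℝ) + 1)) ^ 4), by positivity, 32 * (r + 1) * (2 * r + 3), ?_⟩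
  intro n hn
  obtain ⟨s, hsdef⟩ : ∃ s, s = n / (32 * (r + 1)) := ⟨_, rfl⟩
  have hs : 2 * r + 3 ≤ s := by
    rw [hsdef, Nat.le_div_iff_mul_le (by positivity)]
    linarith
  have hsn : 32 * (r + 1) * s ≤ n := by
    rw [hsdef]; exact Nat.mul_div_le _ _
  have hlt : n < 32 * (r + 1) * (s + 1) := by
    rw [hsdef]; exact Nat.lt_mul_div_succ _ (by positivity)
  have hn64 : n ≤ 64 * (r + 1) * s := by nlinarith
  have hn1 : 1 ≤ n := by nlinarith
  have hb : (Nat.card (MedScale.ball Heis.S n) : ℝ) ≤ 27 * (64 * ((r : ℝ) + 1)) ^ 4 * (s : ℝ) ^ 4 := by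
    have h1 : Nat.card (MedScale.ball Heis.S n) ≤ 27 * (64 * (r + 1) * s) ^ 4 :=
      (Heis.ball_card n hn1).trans (by gcongr)
    have h2 : (Nat.card (MedScale.ball Heis.S n) : ℝ) ≤ ((27 * (64 * (r + 1) * s) ^ 4 : ℕ) : ℝ) :=
      Nat.cast_le.2 h1
    refine h2.trans (le_of_eq ?_)
    push_cast
    ring
  have key : 1 / (27 * (64 * ((r : ℝ) + 1)) ^ 4) * (Nat.card (MedScale.ball Heis.S n) : ℝ) ≤
      ((s ^ 4 : ℕ) : ℝ) := by
    rw [div_mul_eq_mul_div, one_mul, div_le_iff₀ hRpos]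
    push_cast
    linarith
  exact ⟨key.trans (Nat.cast_le.2 (Heis.count_pos r n s hr hs hsn)),
    key.trans (Nat.cast_le.2 (Heis.count_zero r n s hs hsn)),
    key.trans (Nat.cast_le.2 (Heis.count_neg r n s hr hs hsn))⟩
end

section
/- Let F_n be the free group on n ≥ 1 generators with symmetric generating set S = {a₁^{±1}, …, a_n^{±1}} and word metric d. Then for all x ≠ y in F_n, GenCon(x, y) = (1/(2n))·Σ_{s∈S} |s⁻¹ x⁻¹ y s| = d(x, y) + 2 − 2/n. -/
/-- The standard symmetric generating set `S = {a₁^{±1}, …, a_n^{±1}}` of the free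
group `F_n`. -/
def freeGen (n : ℕ) : Set (FreeGroup (Fin n)) :=
  {g | ∃ i : Fin n, g = FreeGroup.of i ∨ g = (FreeGroup.of i)⁻¹}

open FreeGroup in
theorem toWord_left {α : Type*} [DecidableEq α] (i : α) (b : Bool) (g : FreeGroup α) :
    (mk [(i, !b)] * g).toWord =
      if g.toWord.head? = some (i, b) then g.toWord.tail else (i, !b) :: g.toWord := by
  have h : (mk [(i, !b)] * g).toWord = reduce ((i, !b) :: g.toWord) := by
    rw [toWord_mul, toWord_mk, reduce_singleton]; rfl
  rw [h, reduce.cons, reduce_toWord]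
  rcases g.toWord with _ | ⟨⟨j, c⟩, T⟩
  · simp
  · by_cases hij : i = j
    · subst hij
      cases b <;> cases c <;> simp
    · have : ¬ j = i := fun h => hij h.symm
      simp [hij, this]

open FreeGroup in
theorem norm_left {α : Type*} [DecidableEq α] (i : α) (b : Bool) (g : FreeGroup α) :
    ((mk [(i, !b)] * g).norm : ℝ) =
      (g.norm : ℝ) + 1 - 2 * (if g.toWord.head? = some (i, b) then 1 else 0) := by
  unfold FreeGroup.norm
  rw [toWord_left]
  rcases g.toWord with _ | ⟨p, T⟩
  · simp
  · split_ifs with h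
    · simp; ring
    · simp

open FreeGroup in
theorem head_inv {α : Type*} [DecidableEq α] (i : α) (b : Bool) (g : FreeGroup α) :
    (g⁻¹).toWord.head? = some (i, b) ↔ g.toWord.getLast? = some (i, !b) := by
  rw [toWord_inv, invRev, List.head?_reverse, List.getLast?_map]
  rcases g.toWord.getLast? with _ | ⟨j, c⟩
  · simp
  · cases b <;> cases c <;> simp

open FreeGroup in
theorem norm_right {α : Type*} [DecidableEq α] (i : α) (b : Bool) (g : FreeGroup α) :
    ((g * mk [(i, b)]).norm : ℝ) =
      (g.norm : ℝ) + 1 - 2 * (if g.toWord.getLast? = some (i, !b) then 1 else 0) := by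
  have h : (g * mk [(i, b)])⁻¹ = mk [(i, !b)] * g⁻¹ := by
    rw [mul_inv_rev, inv_mk]; rfl
  rw [← norm_inv_eq, h, norm_left, norm_inv_eq]
  simp only [head_inv]

open FreeGroup in
theorem norm_conj {α : Type*} [DecidableEq α] (l : α × Bool) (g : FreeGroup α) (p q : α × Bool)
    (hp : g.toWord.head? = some p) (hq : g.toWord.getLast? = some q) :
    (((mk [l])⁻¹ * g * mk [l]).norm : ℝ) =
      (g.norm : ℝ) + 2 - 2 * (if l = p then 1 else 0)
        - 2 * (if l = (q.1, !q.2) then 1 else 0) := by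
  obtain ⟨i, b⟩ := l
  have h : (mk [(i, b)])⁻¹ = mk [(i, !b)] := by rw [inv_mk]; rfl
  rw [h, norm_right, norm_left, toWord_left, hp]
  have e1 : (some p = some (i, b)) ↔ ((i, b) = p) := by
    rw [Option.some_inj, eq_comm]
  have e2 : ((if some p = some (i, b) then g.toWord.tail else (i, !b) :: g.toWord).getLast?
      = some (i, !b)) ↔ ((i, b) = (q.1, !q.2)) := by
    have e3 : (some q = some (i, !b)) ↔ ((i, b) = (q.1, !q.2)) := by
      obtain ⟨j, c⟩ := q
      cases b <;> cases c <;> simp [eq_comm]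
    rw [← e3, ← hq]
    rcases hL : g.toWord with _ | ⟨p', T⟩
    · simp [hL] at hp
    · have : p' = p := by simpa [hL] using hp
      subst this
      split_ifs with hh
      · have : p' = (i, b) := by simpa using hh
        subst this
        rcases T with _ | ⟨r, T⟩
        · simp
        · simp [List.getLast?_cons_cons]
      · rw [List.getLast?_cons_cons]
  simp only [e2]
  simp only [e1]
  ring

open FreeGroup in
theorem freeGen_eq (n : ℕ) :
    freeGen n = Set.range (fun l : Fin n × Bool => (mk [l] : FreeGroup (Fin n))) := by
  ext g
  simp only [freeGen, Set.mem_ofPred_eq, Set.mem_range, Prod.exists, Bool.exists_bool]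
  refine exists_congr fun i => ?_
  have h : (FreeGroup.of i)⁻¹ = mk [(i, false)] := rfl
  have h' : (FreeGroup.of i) = mk [(i, true)] := rfl
  rw [h, h', or_comm, eq_comm, @eq_comm _ g]

/-- In the free group `F_n` (`n ≥ 1`) with generating set
`S = {a₁^{±1}, …, a_n^{±1}}` (of size `2n`) and reduced word length `|·|`, for all
`x ≠ y` one has `GenCon(x,y) = (1/(2n)) ∑_{s ∈ S} |s⁻¹ x⁻¹ y s| = d(x,y) + 2 − 2/n`. -/
theorem freeGroup_genCon (n : ℕ) (hn : 1 ≤ n) (x y : FreeGroup (Fin n)) (hxy : x ≠ y) :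
    (1 / (2 * n : ℝ)) * ∑ᶠ s ∈ freeGen n, (((s⁻¹ * (x⁻¹ * y) * s).norm : ℝ)) =
      ((x⁻¹ * y).norm : ℝ) + 2 - 2 / (n : ℝ) := by
  have hg : x⁻¹ * y ≠ 1 := fun h => hxy (inv_mul_eq_one.mp h)
  generalize x⁻¹ * y = g at hg
  have hw : g.toWord ≠ [] := fun h => hg (FreeGroup.toWord_eq_nil_iff.mp h)
  have hinj : Function.Injective
      (fun l : Fin n × Bool => (FreeGroup.mk [l] : FreeGroup (Fin n))) := by
    intro l l' h
    have := FreeGroup.reduce.sound h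
    simpa [FreeGroup.reduce_singleton] using this
  rw [freeGen_eq, finsum_mem_range hinj, finsum_eq_sum_of_fintype]
  simp only [norm_conj _ g _ _ (List.head?_eq_some_head hw) (List.getLast?_eq_some_getLast hw)]
  rw [Finset.sum_sub_distrib, Finset.sum_sub_distrib, ← Finset.mul_sum, ← Finset.mul_sum,
    Finset.sum_ite_eq' , Finset.sum_ite_eq']
  have hn' : (n : ℝ) ≠ 0 := by positivity
  simp
  field_simp
  ring
end

section
/- Let F_n be the free group on n ≥ 1 generators with symmetric generating set S = {a₁^{±1}, …, a_n^{±1}} and word metric d. Then for all x ≠ y in F_n and every bijection ζ : S → S, (1/(2n))·Σ_{s∈S} d(x s, y ζ(s)) ≥ d(x, y) + 2 − 2/n, with equality when ζ is the identity. Consequently the transport plan given by GenCon is optimal among permutation plans between the unit spheres about x and y. -/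
open FreeGroup in
theorem ftAux_norm {n : ℕ} {w : List (Fin n × Bool)} (h : IsReduced w) :
    (FreeGroup.mk w).norm = w.length := by
  rw [FreeGroup.norm, FreeGroup.toWord_mk, h.reduce_eq]

theorem ftAux_cancel {n : ℕ} (q : Fin n × Bool) :
    FreeGroup.mk [q] * FreeGroup.mk [(q.1, !q.2)] = 1 := by
  have : FreeGroup.mk [(q.1, !q.2)] = (FreeGroup.mk [q])⁻¹ := by
    simp [FreeGroup.inv_mk, FreeGroup.invRev]
  rw [this, mul_inv_cancel]

open FreeGroup in
theorem ftAux_right {n : ℕ} (v : List (Fin n × Bool)) (q t : Fin n × Bool)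
    (h : IsReduced (v ++ [q])) :
    ((FreeGroup.mk (v ++ [q]) * FreeGroup.mk [t]).norm : ℝ)
      = v.length + 2 - 2 * (if t = (q.1, !q.2) then 1 else 0) := by
  split_ifs with ht
  · subst ht
    rw [← FreeGroup.mul_mk, mul_assoc, ftAux_cancel, mul_one,
      ftAux_norm (h.infix ⟨[], [q], by simp⟩)]
    ring
  · have h2 : IsReduced ([q] ++ [t]) := by
      obtain ⟨q1, q2⟩ := q
      obtain ⟨t1, t2⟩ := t
      simp only [List.singleton_append, isReduced_cons_cons, IsReduced.singleton, and_true]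
      rintro rfl
      revert ht
      cases q2 <;> cases t2 <;> simp
    have h3 := h.append_overlap h2 (by simp)
    rw [FreeGroup.mul_mk, ftAux_norm h3]
    simp

open FreeGroup in
theorem ftAux_left {n : ℕ} (w : List (Fin n × Bool)) (p s : Fin n × Bool)
    (h : IsReduced (p :: w)) (hs : s ≠ p) : IsReduced ((s.1, !s.2) :: p :: w) := by
  rw [isReduced_cons_cons]
  refine ⟨?_, h⟩
  obtain ⟨q1, q2⟩ := s
  obtain ⟨t1, t2⟩ := p
  rintro h
  simp only at h
  subst h
  revert hs
  cases q2 <;> cases t2 <;> simp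

theorem ftAux_inv {n : ℕ} (s : Fin n × Bool) :
    (FreeGroup.mk [s])⁻¹ = FreeGroup.mk [(s.1, !s.2)] := by
  simp [FreeGroup.inv_mk, FreeGroup.invRev]

open FreeGroup in
theorem ftAux_word {n : ℕ} (w : List (Fin n × Bool)) (h : IsReduced w) (hw : w ≠ []) :
    ∃ p q : Fin n × Bool, ∀ s t : Fin n × Bool,
      ((w.length : ℝ) + 2 - 2 * (if s = p then 1 else 0) - 2 * (if t = q then 1 else 0)
        ≤ (((FreeGroup.mk [s])⁻¹ * FreeGroup.mk w * FreeGroup.mk [t]).norm : ℝ)) ∧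
      (s = t → (((FreeGroup.mk [s])⁻¹ * FreeGroup.mk w * FreeGroup.mk [t]).norm : ℝ) =
        (w.length : ℝ) + 2 - 2 * (if s = p then 1 else 0) - 2 * (if t = q then 1 else 0)) := by
  obtain ⟨p, w, rfl⟩ := List.exists_cons_of_ne_nil hw
  rcases List.eq_nil_or_concat w with rfl | ⟨v, q, rfl⟩
  · refine ⟨p, (p.1, !p.2), fun s t => ?_⟩
    by_cases hs : s = p
    · subst hs
      rw [inv_mul_cancel, one_mul, ftAux_norm IsReduced.singleton]
      constructor
      · simp only [if_true, List.length_singleton]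
        split_ifs <;> norm_num
      · rintro rfl
        rw [if_neg (show s ≠ (s.1, !s.2) by
          intro h
          have := congrArg Prod.snd h
          simp at this)]
        norm_num
    · have h1 := ftAux_left _ _ _ h hs
      have h2 := ftAux_right [(s.1, !s.2)] p t h1
      rw [ftAux_inv, FreeGroup.mul_mk]
      simp only [List.singleton_append] at h2 ⊢
      rw [h2, if_neg hs]
      simp
  · rw [List.concat_eq_append] at *
    refine ⟨p, (q.1, !q.2), fun s t => ?_⟩
    by_cases hs : s = p
    · subst hs
      have h2 := ftAux_right v q t (h.infix ⟨[s], [], by simp⟩)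
      have h3 : (FreeGroup.mk [s])⁻¹ * FreeGroup.mk (s :: (v ++ [q]))
          = FreeGroup.mk (v ++ [q]) := by
        rw [inv_mul_eq_iff_eq_mul, FreeGroup.mul_mk]
        simp
      rw [h3, h2]
      simp only [List.length_cons, List.length_append, List.length_nil, if_true]
      push_cast
      constructor
      · linarith
      · intro _
        ring
    · have h1 := ftAux_left _ _ _ h hs
      have h2 := ftAux_right ((s.1, !s.2) :: p :: v) q t (by simpa using h1)
      rw [ftAux_inv, FreeGroup.mul_mk]
      simp only [List.cons_append, List.nil_append] at h2 ⊢
      rw [h2, if_neg hs]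
      simp only [List.length_cons, List.length_append, List.length_nil]
      push_cast
      constructor
      · linarith
      · intro _
        ring

theorem ftAux_inj {n : ℕ} :
    Function.Injective (fun p : Fin n × Bool => FreeGroup.mk [p]) := by
  intro a b h
  have := congrArg FreeGroup.toWord h
  simpa [FreeGroup.toWord_mk, FreeGroup.reduce_singleton] using this

theorem ftAux_gen (n : ℕ) :
    freeGen n = ((Finset.univ.image (fun p : Fin n × Bool => FreeGroup.mk [p]) :
      Finset (FreeGroup (Fin n))) : Set (FreeGroup (Fin n))) := by
  ext g
  simp only [freeGen, Set.mem_ofPred_eq, Finset.coe_image, Finset.coe_univ, Set.image_univ,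
    Set.mem_range, Prod.exists, Bool.exists_bool]
  refine exists_congr fun i => ?_
  have : (FreeGroup.of i)⁻¹ = FreeGroup.mk [(i, false)] := rfl
  rw [this]
  constructor
  · rintro (h | h)
    · exact Or.inr h.symm
    · exact Or.inl h.symm
  · rintro (h | h)
    · exact Or.inr h.symm
    · exact Or.inl h.symm

theorem ftAux_group {n : ℕ} (g : FreeGroup (Fin n)) (hg : g ≠ 1) :
    ∃ P ∈ freeGen n, ∃ Q ∈ freeGen n, ∀ s ∈ freeGen n, ∀ t ∈ freeGen n,
      ((g.norm : ℝ) + 2 - 2 * (if s = P then 1 else 0) - 2 * (if t = Q then 1 else 0)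
        ≤ ((s⁻¹ * g * t).norm : ℝ)) ∧
      (s = t → ((s⁻¹ * g * t).norm : ℝ) =
        (g.norm : ℝ) + 2 - 2 * (if s = P then 1 else 0) - 2 * (if t = Q then 1 else 0)) := by
  obtain ⟨p, q, h⟩ := ftAux_word g.toWord FreeGroup.isReduced_toWord
    (by simpa [FreeGroup.toWord_eq_nil_iff] using hg)
  rw [ftAux_gen]
  refine ⟨FreeGroup.mk [p], by simp, FreeGroup.mk [q], by simp, ?_⟩
  intro s hs t ht
  simp only [Finset.coe_image, Finset.coe_univ, Set.image_univ, Set.mem_range] at hs ht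
  obtain ⟨s, rfl⟩ := hs
  obtain ⟨t, rfl⟩ := ht
  have h1 := h s t
  rw [FreeGroup.mk_toWord] at h1
  have e1 : (FreeGroup.mk [s] = FreeGroup.mk [p]) ↔ s = p := ftAux_inj.eq_iff
  have e2 : (FreeGroup.mk [t] = FreeGroup.mk [q]) ↔ t = q := ftAux_inj.eq_iff
  have e3 : (FreeGroup.mk [s] = FreeGroup.mk [t]) ↔ s = t := ftAux_inj.eq_iff
  simp only [e1, e2, e3]
  exact h1

/-- In the free group `F_n` (`n ≥ 1`) with generating set
`S = {a₁^{±1}, …, a_n^{±1}}` and word metric `d(x,y) = |x⁻¹y|` (reduced word length),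
for all `x ≠ y` and every bijection `ζ : S → S` the permutation transport plan has cost
`(1/(2n)) ∑_{s ∈ S} d(xs, yζ(s)) ≥ d(x,y) + 2 − 2/n`, with equality when `ζ` is the
identity: the plan given by `GenCon` is optimal among permutation plans between the
unit spheres about `x` and `y`. -/
theorem freeGroup_transport_optimal (n : ℕ) (hn : 1 ≤ n) (x y : FreeGroup (Fin n))
    (hxy : x ≠ y) :
    (∀ ζ : FreeGroup (Fin n) → FreeGroup (Fin n), Set.BijOn ζ (freeGen n) (freeGen n) →
      ((x⁻¹ * y).norm : ℝ) + 2 - 2 / (n : ℝ) ≤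
        (1 / (2 * n : ℝ)) * ∑ᶠ s ∈ freeGen n, (((x * s)⁻¹ * (y * ζ s)).norm : ℝ)) ∧
    (1 / (2 * n : ℝ)) * ∑ᶠ s ∈ freeGen n, (((x * s)⁻¹ * (y * s)).norm : ℝ) =
      ((x⁻¹ * y).norm : ℝ) + 2 - 2 / (n : ℝ) := by
  have hg : x⁻¹ * y ≠ 1 := fun h => hxy (inv_mul_eq_one.mp h)
  obtain ⟨P, hP, Q, hQ, H⟩ := ftAux_group _ hg
  have hn0 : (n : ℝ) ≠ 0 := by
    have : n ≠ 0 := by omega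
    exact_mod_cast this
  have hn1 : (0 : ℝ) < n := by
    have : 0 < n := by omega
    exact_mod_cast this
  have hre : ∀ s t : FreeGroup (Fin n), (x * s)⁻¹ * (y * t) = s⁻¹ * (x⁻¹ * y) * t := by
    intro s t
    group
  simp only [hre]
  generalize x⁻¹ * y = g at *
  obtain ⟨T, hT, hc⟩ : ∃ T : Finset (FreeGroup (Fin n)), freeGen n = (T : Set _) ∧
      T.card = 2 * n := by
    refine ⟨_, ftAux_gen n, ?_⟩
    rw [Finset.card_image_of_injective _ ftAux_inj]
    simp [mul_comm]
  simp only [hT, Finset.mem_coe] at hP hQ H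
  simp only [hT]
  have key : ∀ ζ : FreeGroup (Fin n) → FreeGroup (Fin n), Set.BijOn ζ T T →
      (1 / (2 * n : ℝ)) * ∑ s ∈ T, ((g.norm : ℝ) + 2 - 2 * (if s = P then 1 else 0)
        - 2 * (if ζ s = Q then 1 else 0)) = (g.norm : ℝ) + 2 - 2 / (n : ℝ) := by
    intro ζ hζ
    have h2 : ∑ s ∈ T, (if ζ s = Q then (1 : ℝ) else 0) = ∑ s ∈ T, if s = Q then 1 else 0 := by
      rw [← finsum_mem_coe_finset, ← finsum_mem_coe_finset]
      exact finsum_mem_eq_of_bijOn ζ hζ fun _ _ => rfl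
    have hP' : P ∈ T := hP
    have hQ' : Q ∈ T := hQ
    rw [Finset.sum_sub_distrib, Finset.sum_sub_distrib, ← Finset.mul_sum, ← Finset.mul_sum, h2,
      Finset.sum_ite_eq', Finset.sum_ite_eq', if_pos hP', if_pos hQ', Finset.sum_const, hc,
      nsmul_eq_mul]
    push_cast
    field_simp
    ring
  constructor
  · intro ζ hζ
    rw [finsum_mem_coe_finset, ← key ζ hζ]
    refine mul_le_mul_of_nonneg_left ?_ (by positivity)
    exact Finset.sum_le_sum fun s hs => (H s hs (ζ s) (hζ.mapsTo hs)).1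
  · rw [finsum_mem_coe_finset, ← key id (Set.bijOn_id _)]
    congr 1
    exact Finset.sum_congr rfl fun s hs => (H s hs s hs).2 rfl
end
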